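/- Let 1 ≤ r < 2 and fix φ and φ_i as in the context. There exists a constant C such that for every jump collection (N_k)_{k≥0}, every sequence (f_i)_{i∈ℤ} of measurable functions on ℝ with ‖(f_i)‖_{1,r} < ∞, and every λ > 0, the Lebesgue measure of the set { x ∈ ℝ : (Σ_{k≥1} |Σ_{N_{k−1}(x) < i ≤ N_k(x)} (φ_i * f_i)(x)|^r)^{1/r} > λ } is at most (C/λ) ‖(f_i)‖_{1,r}. -/

import Mathlib

open MeasureTheory ENNReal
open scoped FourierTransform NNReal

noncomputable section

/-- A jump collection: a sequence of measurable integer-valued functions on `ℝ`,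
nondecreasing in the index. -/
def IsJumpCollection (Nk : ℕ → ℝ → ℤ) : Prop :=
  (∀ k, Measurable (Nk k)) ∧ ∀ (k : ℕ) (x : ℝ), Nk k x ≤ Nk (k + 1) x

/-- The dilate `φ_i(x) = 2^i φ(2^i x)` of a Schwartz function `φ`. -/
def dilate (φ : SchwartzMap ℝ ℂ) (i : ℤ) : ℝ → ℂ :=
  fun x => ((2 : ℝ) ^ i : ℝ) • φ (((2 : ℝ) ^ i) * x)

/-- Convolution `(φ_i * h)(x) = ∫ φ_i(x - y) h(y) dy`. -/
def conv (φi : ℝ → ℂ) (h : ℝ → ℂ) : ℝ → ℂ :=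
  fun x => ∫ y : ℝ, φi (x - y) * h y

/-- The mixed norm `‖(f_i)‖_{1,r} = ‖(∑_i |f_i|^r)^(1/r)‖_{L^1}`. -/
def mixedNorm1 (r : ℝ) (f : ℤ → ℝ → ℂ) : ℝ≥0∞ :=
  ∫⁻ x : ℝ, (∑' i : ℤ, (ENNReal.ofReal ‖f i x‖) ^ r) ^ (1 / r)

/-- The basic bump `1/(1+t^2)`. -/
def th (t : ℝ) : ℝ := (1 + t ^ 2)⁻¹

/-- Dilated bump. -/
def wk (c t : ℝ) : ℝ := c * th (c * t)

lemma th_pos (t : ℝ) : 0 < th t := by unfold th; positivity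

lemma th_le_one (t : ℝ) : th t ≤ 1 := by
  unfold th
  apply inv_le_one_of_one_le₀
  nlinarith [sq_nonneg t]

lemma th_le_three {s t : ℝ} (h : |s - t| ≤ 1) : th s ≤ 3 * th t := by
  unfold th
  have h2 := abs_le.1 h
  rw [inv_le_iff_one_le_mul₀ (by positivity), mul_right_comm, ← div_eq_mul_inv,
    le_div_iff₀ (by positivity)]
  nlinarith [sq_nonneg (2 * s - t), sq_nonneg (s - 2 * t), sq_nonneg (s+t)]

lemma th_anti {s t : ℝ} (h : |s| ≤ |t|) : th t ≤ th s := by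
  unfold th
  have := sq_le_sq.2 h
  apply inv_anti₀ (by positivity); linarith

/-- Quantitative properties of the family of kernels. -/
structure GoodKernel (A : ℝ) (K : ℤ → ℝ → ℂ) : Prop where
  nonneg : 0 ≤ A
  cont : ∀ i, Continuous (K i)
  size : ∀ i t, ‖K i t‖ ≤ A * wk (2 ^ i) t
  smooth : ∀ i s t, (2:ℝ) ^ i * |s - t| ≤ 1 →
    ‖K i s - K i t‖ ≤ A * ((2:ℝ) ^ i * |s - t|) * wk (2 ^ i) t
  cancel : ∀ i a b, ‖∫ t in a..b, K i t‖ ≤ A * (th (2 ^ i * a) + th (2 ^ i * b))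

lemma schwartz_bound (φ : SchwartzMap ℝ ℂ) (n : ℕ) :
    ∃ C, 0 ≤ C ∧ ∀ x : ℝ, ‖iteratedDeriv n φ x‖ ≤ C * th x ^ 2 := by
  obtain ⟨C0, h0, H0⟩ := φ.decay 0 n
  obtain ⟨C4, h4, H4⟩ := φ.decay 4 n
  refine ⟨2 * (C0 + C4), by positivity, fun x => ?_⟩
  have a := H0 x
  have b := H4 x
  rw [norm_iteratedFDeriv_eq_norm_iteratedDeriv] at a b
  unfold th
  rw [inv_pow, ← div_eq_mul_inv, le_div_iff₀ (by positivity)]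
  have : ‖x‖ ^ 4 = x ^ 4 := by
    rw [Real.norm_eq_abs]; exact (by decide : Even 4).pow_abs x
  rw [this] at b
  simp only [pow_zero, one_mul] at a
  have h5 : 0 ≤ ‖iteratedDeriv n φ x‖ := norm_nonneg _
  have h6 : (1 + x ^ 2) ^ 2 ≤ 2 * (1 + x ^ 4) := by nlinarith [sq_nonneg (x ^ 2 - 1)]
  nlinarith [mul_le_mul_of_nonneg_left h6 h5]

lemma th_integrable : Integrable th := integrable_inv_one_add_sq

lemma phi_int_bound (φ : SchwartzMap ℝ ℂ) (h0 : ∫ x, φ x = 0) {C : ℝ} (hC : 0 ≤ C)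
    (h : ∀ x, ‖φ x‖ ≤ C * th x ^ 2) (t : ℝ) :
    ‖∫ x in Set.Iic t, φ x‖ ≤ C * Real.pi * th t := by
  have hInt0 : Integrable φ := φ.integrable
  have key : ∀ S : Set ℝ, MeasurableSet S → (∀ x ∈ S, |t| ≤ |x|) →
      ‖∫ x in S, φ x‖ ≤ C * Real.pi * th t := by
    intro S hS hSt
    calc ‖∫ x in S, φ x‖ ≤ ∫ x in S, ‖φ x‖ := norm_integral_le_integral_norm _
      _ ≤ ∫ x in S, (C * th t) * th x := by
        apply setIntegral_mono_on hInt0.norm.integrableOn (th_integrable.const_mul _).integrableOn hS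
        intro x hx
        refine (h x).trans ?_
        have := th_anti (hSt x hx)
        rw [pow_two, ← mul_assoc]
        have := th_pos x
        gcongr
      _ ≤ ∫ x, (C * th t) * th x := by
        apply setIntegral_le_integral (th_integrable.const_mul _)
        filter_upwards with x
        have := th_pos x
        have := th_pos t
        simp only [Pi.zero_apply]
        positivity
      _ = C * Real.pi * th t := by
        rw [integral_const_mul]
        have : ∫ x, th x = Real.pi := integral_univ_inv_one_add_sq
        rw [this]; ring
  rcases le_total t 0 with ht | ht
  · apply key _ measurableSet_Iic
    intro x hx
    have hx' : x ≤ t := hx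
    rw [abs_of_nonpos ht, abs_of_nonpos (hx'.trans ht)]; linarith
  · have := integral_add_compl (measurableSet_Iic (a := t)) hInt0
    rw [h0, add_eq_zero_iff_eq_neg] at this
    rw [this, norm_neg]
    apply key _ measurableSet_Iic.compl
    intro x hx
    have hx' : t < x := by simpa using hx
    rw [abs_of_nonneg ht, abs_of_nonneg (ht.trans hx'.le)]; exact hx'.le

lemma goodKernel_dilate (φ : SchwartzMap ℝ ℂ) (h0 : ∫ x, φ x = 0) :
    ∃ A, GoodKernel A (dilate φ) := by
  obtain ⟨C0, hC0, H0⟩ := schwartz_bound φ 0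
  obtain ⟨C1, hC1, H1⟩ := schwartz_bound φ 1
  simp only [iteratedDeriv_zero, iteratedDeriv_one] at H0 H1
  have hle : ∀ x, th x ^ 2 ≤ th x := fun x => by
    have := th_pos x; have := th_le_one x; nlinarith
  have hpi := Real.pi_pos
  have hA0 : C0 ≤ C0 * Real.pi + C0 + 3 * C1 := by nlinarith [mul_nonneg hC0 hpi.le]
  have hA1 : 3 * C1 ≤ C0 * Real.pi + C0 + 3 * C1 := by nlinarith [mul_nonneg hC0 hpi.le]
  have hA2 : C0 * Real.pi ≤ C0 * Real.pi + C0 + 3 * C1 := by nlinarith [mul_nonneg hC0 hpi.le]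
  refine ⟨C0 * Real.pi + C0 + 3 * C1, by positivity, ?_, ?_, ?_, ?_⟩
  · intro i
    unfold dilate
    exact Continuous.const_smul (φ.continuous.comp (continuous_const.mul continuous_id)) ((2:ℝ) ^ i)
  · intro i t
    have hc : (0:ℝ) < 2 ^ i := by positivity
    unfold dilate wk
    rw [norm_smul, Real.norm_eq_abs, abs_of_pos hc]
    have := (H0 (2 ^ i * t)).trans (mul_le_mul_of_nonneg_left (hle _) hC0)
    have h3 := this.trans (mul_le_mul_of_nonneg_right hA0 (th_pos _).le)
    nlinarith
  · intro i s t hst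
    have hc : (0:ℝ) < 2 ^ i := by positivity
    unfold dilate wk
    rw [← smul_sub, norm_smul, Real.norm_eq_abs, abs_of_pos hc]
    have h2 : |2 ^ i * s - 2 ^ i * t| ≤ 1 := by
      rw [← mul_sub, abs_mul, abs_of_pos hc]; exact hst
    have h3 := Convex.norm_image_sub_le_of_norm_deriv_le (𝕜 := ℝ) (f := φ)
      (s := Metric.closedBall (2 ^ i * t) 1) (x := 2 ^ i * t) (y := 2 ^ i * s)
      (C := 3 * C1 * th (2 ^ i * t)) (fun x _ => φ.differentiable.differentiableAt) (by
        intro x hx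
        have hx' : |x - 2 ^ i * t| ≤ 1 := by simpa [Real.dist_eq] using hx
        have h4 := th_le_three hx'
        have := (H1 x).trans (mul_le_mul_of_nonneg_left (hle _) hC1)
        nlinarith) (convex_closedBall _ _) (by simp) (by simpa [Real.dist_eq] using h2)
    rw [Real.norm_eq_abs, ← mul_sub, abs_mul, abs_of_pos hc] at h3
    have h4 : 3 * C1 * th (2 ^ i * t) * (2 ^ i * |s - t|) ≤
      (C0 * Real.pi + C0 + 3 * C1) * th (2 ^ i * t) * (2 ^ i * |s - t|) := by
      have := (th_pos (2 ^ i * t)).le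
      gcongr
    calc _ ≤ 2 ^ i * _ := mul_le_mul_of_nonneg_left (h3.trans h4) hc.le
      _ = _ := by ring
  · intro i a b
    have e : ∫ t in a..b, dilate φ i t = ∫ x in (2 ^ i * a)..(2 ^ i * b), φ x := by
      unfold dilate
      rw [intervalIntegral.integral_smul, intervalIntegral.smul_integral_comp_mul_left]
    rw [e, ← intervalIntegral.integral_Iic_sub_Iic φ.integrable.integrableOn
      φ.integrable.integrableOn]
    refine (norm_sub_le _ _).trans ?_
    have h1 := phi_int_bound φ h0 hC0 H0 (2 ^ i * a)
    have h2 := phi_int_bound φ h0 hC0 H0 (2 ^ i * b)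
    have h3 := mul_le_mul_of_nonneg_right hA2 (th_pos (2 ^ i * a)).le
    have h4 := mul_le_mul_of_nonneg_right hA2 (th_pos (2 ^ i * b)).le
    linarith

lemma phi_mean_zero (Nb : ℝ) (φ : SchwartzMap ℝ ℂ)
    (hφ : ∀ ξ : ℝ, 𝓕 (⇑φ) ξ ≠ 0 → (2 : ℝ) ^ (-Nb) < |ξ| ∧ |ξ| < (2 : ℝ) ^ Nb) :
    ∫ x, φ x = 0 := by
  by_contra h
  have h1 : 𝓕 (⇑φ) 0 = ∫ x, φ x := by
    rw [Real.fourier_eq]; simp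
  have := (hφ 0 (by rw [h1]; exact h)).1
  have h2 : (0:ℝ) < 2 ^ (-Nb) := by positivity
  simp at this
  linarith

/-- `∫ wk = π`. -/
lemma lintegral_wk {c : ℝ} (hc : 0 < c) (x : ℝ) :
    ∫⁻ y, ENNReal.ofReal (wk c (x - y)) = ENNReal.ofReal Real.pi := by
  rw [lintegral_sub_left_eq_self (fun t => ENNReal.ofReal (wk c t)) x]
  have hi : Integrable (wk c) := (th_integrable.comp_mul_left' hc.ne').const_mul c
  rw [← ofReal_integral_eq_lintegral_ofReal hi (by
    filter_upwards with t
    have := th_pos (c * t)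
    simp only [wk, Pi.zero_apply]; positivity)]
  congr 1
  unfold wk
  rw [integral_const_mul, Measure.integral_comp_mul_left (fun y => th y) c]
  have : ∫ x, th x = Real.pi := integral_univ_inv_one_add_sq
  rw [this, abs_of_pos (by positivity), smul_eq_mul]
  field_simp

lemma lintegral_wk' {c : ℝ} (hc : 0 < c) (x : ℝ) :
    ∫⁻ y, ENNReal.ofReal (wk c (y - x)) = ENNReal.ofReal Real.pi := by
  rw [← lintegral_wk hc x]
  congr 1; ext y; unfold wk th
  congr 4
  ring

lemma wk_continuous (c : ℝ) : Continuous (wk c) := by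
  unfold wk th
  have : ∀ x : ℝ, 1 + (c * x) ^ 2 ≠ 0 := fun x => by positivity
  fun_prop (disch := exact this)

lemma wk_nonneg {c : ℝ} (hc : 0 < c) (t : ℝ) : 0 ≤ wk c t :=
  mul_nonneg hc.le (th_pos _).le

lemma wk_le {c : ℝ} (hc : 0 < c) (t : ℝ) : wk c t ≤ c := by
  unfold wk
  have := th_le_one (c * t)
  nlinarith

lemma lintegral_cs (k g : ℝ → ℝ≥0∞) (hk : Measurable k) (hg : Measurable g) :
    (∫⁻ y, k y * g y) ^ 2 ≤ (∫⁻ y, k y) * ∫⁻ y, k y * g y ^ 2 := by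
  have hsq : ∀ a : ℝ≥0∞, a ^ (1/2:ℝ) * a ^ (1/2:ℝ) = a := fun a => by
    rw [← ENNReal.rpow_add_of_nonneg _ _ (by norm_num) (by norm_num)]; norm_num
  have h2 : ∀ a : ℝ≥0∞, (a ^ (1/2:ℝ)) ^ (2:ℝ) = a := fun a => by
    rw [← ENNReal.rpow_mul]; norm_num
  have h := ENNReal.lintegral_mul_le_Lp_mul_Lq (volume : Measure ℝ) Real.HolderConjugate.two_two
    (f := fun y => k y ^ (1/2:ℝ)) (g := fun y => k y ^ (1/2:ℝ) * g y)
    (hk.pow_const _).aemeasurable ((hk.pow_const _).mul hg).aemeasurable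
  simp only [Pi.mul_apply, ← mul_assoc, hsq, h2, ENNReal.mul_rpow_of_nonneg _ _ (zero_le_two)] at h
  have h3 := pow_le_pow_left' h 2
  rw [mul_pow] at h3
  have h4 : ∀ a : ℝ≥0∞, (a ^ (1/2:ℝ)) ^ 2 = a := fun a => by rw [pow_two, hsq]
  rw [h4, h4] at h3
  refine h3.trans_eq ?_
  congr 2
  ext y; congr 1
  exact ENNReal.rpow_ofNat _ _

lemma schur_L2 {T : ℝ → ℝ≥0∞} {k : ℝ → ℝ → ℝ≥0∞} {g : ℝ → ℝ≥0∞} {a b : ℝ≥0∞}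
    (hk : Measurable (Function.uncurry k)) (hg : Measurable g)
    (hT : ∀ x, T x ≤ ∫⁻ y, k x y * g y) (ha : ∀ x, ∫⁻ y, k x y ≤ a)
    (hb : ∀ y, ∫⁻ x, k x y ≤ b) :
    ∫⁻ x, T x ^ 2 ≤ a * b * ∫⁻ y, g y ^ 2 := by
  have hk1 : ∀ x, Measurable (k x) := fun x => hk.of_uncurry_left
  have hm : Measurable (Function.uncurry fun x y => k x y * g y ^ 2) :=
    hk.mul ((hg.comp measurable_snd).pow_const 2)
  calc ∫⁻ x, T x ^ 2 ≤ ∫⁻ x, a * ∫⁻ y, k x y * g y ^ 2 := by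
        apply lintegral_mono; intro x
        refine (pow_le_pow_left' (hT x) 2).trans ((lintegral_cs _ _ (hk1 x) hg).trans ?_)
        exact mul_le_mul_left (ha x) _
    _ = a * ∫⁻ x, ∫⁻ y, k x y * g y ^ 2 := lintegral_const_mul _ hm.lintegral_prod_right
    _ = a * ∫⁻ y, ∫⁻ x, k x y * g y ^ 2 := by rw [lintegral_lintegral_swap hm.aemeasurable]
    _ ≤ a * ∫⁻ y, b * g y ^ 2 := by
        gcongr with y
        rw [lintegral_mul_const _ (hk.of_uncurry_right)]
        gcongr
        exact hb y
    _ = a * b * ∫⁻ y, g y ^ 2 := by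
        rw [lintegral_const_mul _ (hg.pow_const 2), mul_assoc]

lemma schur_L1 {T : ℝ → ℝ≥0∞} {k : ℝ → ℝ → ℝ≥0∞} {g : ℝ → ℝ≥0∞} {b : ℝ≥0∞}
    (hk : Measurable (Function.uncurry k)) (hg : Measurable g)
    (hT : ∀ x, T x ≤ ∫⁻ y, k x y * g y) (hb : ∀ y, ∫⁻ x, k x y ≤ b) :
    ∫⁻ x, T x ≤ b * ∫⁻ y, g y := by
  have hm : Measurable (Function.uncurry fun x y => k x y * g y) :=
    hk.mul (hg.comp measurable_snd)
  calc ∫⁻ x, T x ≤ ∫⁻ x, ∫⁻ y, k x y * g y := lintegral_mono hT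
    _ = ∫⁻ y, ∫⁻ x, k x y * g y := by rw [lintegral_lintegral_swap hm.aemeasurable]
    _ ≤ ∫⁻ y, b * g y := by
        gcongr with y
        rw [lintegral_mul_const _ (hk.of_uncurry_right)]
        gcongr
        exact hb y
    _ = b * ∫⁻ y, g y := lintegral_const_mul _ hg

/-- A symmetric sub-Markov kernel. -/
structure AvgKer (κ : ℝ → ℝ → ℝ) : Prop where
  meas : Measurable (Function.uncurry κ)
  nonneg : ∀ x z, 0 ≤ κ x z
  symm : ∀ x z, κ x z = κ z x
  mass : ∀ x, ∫⁻ z, ENNReal.ofReal (κ x z) ≤ 1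

/-- The averaging operator. -/
def avgOp (κ : ℝ → ℝ → ℝ) (h : ℝ → ℂ) (x : ℝ) : ℂ := ∫ z, (κ x z : ℂ) * h z


lemma enorm_ofReal_mul {a : ℝ} (ha : 0 ≤ a) (z : ℂ) :
    ‖(a : ℂ) * z‖ₑ = ENNReal.ofReal a * ‖z‖ₑ := by
  rw [enorm_mul]
  congr 1
  rw [← ofReal_norm, Complex.norm_real, Real.norm_of_nonneg ha]

lemma AvgKer.meas_left {κ : ℝ → ℝ → ℝ} (hκ : AvgKer κ) (x : ℝ) : Measurable (κ x) :=
  hκ.meas.of_uncurry_left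

lemma AvgKer.integrable_ker {κ : ℝ → ℝ → ℝ} (hκ : AvgKer κ) (x : ℝ) : Integrable (κ x) := by
  refine ⟨(hκ.meas_left x).aestronglyMeasurable, ?_⟩
  rw [hasFiniteIntegral_iff_ofReal (by filter_upwards with z using hκ.nonneg x z)]
  exact (hκ.mass x).trans_lt ENNReal.one_lt_top

lemma AvgKer.integrable_prod {κ : ℝ → ℝ → ℝ} (hκ : AvgKer κ) {h : ℝ → ℂ} (hm : Measurable h)
    (hi : Integrable h) :
    Integrable (fun p : ℝ × ℝ => (κ p.1 p.2 : ℂ) * h p.2) (volume.prod volume) := by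
  have hmm : Measurable (fun p : ℝ × ℝ => (κ p.1 p.2 : ℂ) * h p.2) :=
    (Complex.measurable_ofReal.comp hκ.meas).mul (hm.comp measurable_snd)
  refine ⟨hmm.aestronglyMeasurable, ?_⟩
  have hmk : Measurable (Function.uncurry fun x y => ENNReal.ofReal (κ x y)) :=
    ENNReal.measurable_ofReal.comp hκ.meas
  have := schur_L1 (T := fun x => ∫⁻ y, ENNReal.ofReal (κ x y) * ‖h y‖ₑ) (b := 1)
    (k := fun x y => ENNReal.ofReal (κ x y))
    hmk hm.enorm (fun x => le_rfl)
    (fun y => by simpa only [hκ.symm _ y] using hκ.mass y)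
  rw [hasFiniteIntegral_iff_enorm, lintegral_prod _ hmm.enorm.aemeasurable]
  simp only [enorm_ofReal_mul (hκ.nonneg _ _)]
  refine this.trans_lt ?_
  rw [one_mul]; exact hi.2

lemma AvgKer.measurable_avgOp {κ : ℝ → ℝ → ℝ} (hκ : AvgKer κ) {h : ℝ → ℂ} (hm : Measurable h) :
    Measurable (avgOp κ h) := by
  have hmm : Measurable (Function.uncurry fun x z : ℝ => (κ x z : ℂ) * h z) :=
    (Complex.measurable_ofReal.comp hκ.meas).mul (hm.comp measurable_snd)
  exact (hmm.stronglyMeasurable.integral_prod_right).measurable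

lemma AvgKer.integrable_avgOp {κ : ℝ → ℝ → ℝ} (hκ : AvgKer κ) {h : ℝ → ℂ} (hm : Measurable h)
    (hi : Integrable h) : Integrable (avgOp κ h) :=
  (hκ.integrable_prod hm hi).integral_prod_left

lemma enorm_avgOp_le {κ : ℝ → ℝ → ℝ} (hκ : AvgKer κ) (h : ℝ → ℂ) (x : ℝ) :
    ‖avgOp κ h x‖ₑ ≤ ∫⁻ z, ENNReal.ofReal (κ x z) * ‖h z‖ₑ := by
  refine (enorm_integral_le_lintegral_enorm _).trans_eq ?_
  simp only [enorm_ofReal_mul (hκ.nonneg _ _)]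

lemma AvgKer.adj {κ : ℝ → ℝ → ℝ} (hκ : AvgKer κ) {h W : ℝ → ℂ} (hm : Measurable h)
    (hi : Integrable h) (hW : Measurable W) {B : ℝ} (hB : ∀ x, ‖W x‖ ≤ B) :
    ∫ x, W x * avgOp κ h x = ∫ z, avgOp κ W z * h z := by
  have h1 : Integrable (fun p : ℝ × ℝ => W p.1 * ((κ p.1 p.2 : ℂ) * h p.2))
      (volume.prod volume) :=
    (hκ.integrable_prod hm hi).bdd_mul (c := B)
      (hW.comp measurable_fst).aestronglyMeasurable (by filter_upwards with p using hB _)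
  calc ∫ x, W x * avgOp κ h x = ∫ x, ∫ z, W x * ((κ x z : ℂ) * h z) := by
        congr 1; ext x; rw [integral_const_mul]; rfl
    _ = ∫ z, ∫ x, W x * ((κ x z : ℂ) * h z) := integral_integral_swap h1
    _ = ∫ z, avgOp κ W z * h z := by
        congr 1; ext z
        rw [avgOp, ← integral_mul_const]
        congr 1; ext x
        rw [hκ.symm x z]; ring

/-- The dyadic averaging kernel. -/
def dk (n : ℤ) (x z : ℝ) : ℝ := if ⌊(2:ℝ) ^ n * x⌋ = ⌊(2:ℝ) ^ n * z⌋ then (2:ℝ) ^ n else 0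

lemma dk_nonneg (n : ℤ) (x z : ℝ) : 0 ≤ dk n x z := by
  unfold dk; split_ifs <;> positivity

lemma dk_symm (n : ℤ) (x z : ℝ) : dk n x z = dk n z x := by
  unfold dk; simp only [eq_comm]

lemma floor_set (n : ℤ) (m : ℤ) :
    {z : ℝ | m = ⌊(2:ℝ) ^ n * z⌋} = Set.Ico ((m:ℝ) / 2 ^ n) ((m + 1) / 2 ^ n) := by
  have hc : (0:ℝ) < 2 ^ n := by positivity
  ext z
  simp only [Set.mem_ofPred_eq, Set.mem_Ico, div_le_iff₀ hc, lt_div_iff₀ hc]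
  rw [eq_comm, Int.floor_eq_iff, mul_comm]

lemma floor_close {n : ℤ} {x z : ℝ} (h : ⌊(2:ℝ) ^ n * x⌋ = ⌊(2:ℝ) ^ n * z⌋) :
    (2:ℝ) ^ n * |x - z| ≤ 1 := by
  have hc : (0:ℝ) < 2 ^ n := by positivity
  have e : (2:ℝ) ^ n * |x - z| = |(2:ℝ) ^ n * x - 2 ^ n * z| := by
    rw [← mul_sub, abs_mul, abs_of_pos hc]
  rw [e]
  exact (Int.abs_sub_lt_one_of_floor_eq_floor h).le

lemma floor_succ {n : ℤ} {x z : ℝ} (h : ⌊(2:ℝ) ^ (n + 1) * x⌋ = ⌊(2:ℝ) ^ (n + 1) * z⌋) :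
    ⌊(2:ℝ) ^ n * x⌋ = ⌊(2:ℝ) ^ n * z⌋ := by
  rw [zpow_add_one₀ (by norm_num)] at h
  have key : ∀ y : ℝ, ⌊(2:ℝ) ^ n * y⌋ = ⌊(2:ℝ) ^ n * 2 * y⌋ / 2 := by
    intro y
    rw [Int.floor_eq_iff]
    have h1 := Int.floor_le ((2:ℝ) ^ n * 2 * y)
    have h2 := Int.lt_floor_add_one ((2:ℝ) ^ n * 2 * y)
    set q := ⌊(2:ℝ) ^ n * 2 * y⌋
    have h3 : 2 * (q / 2) ≤ q := by omega
    have h4 : q + 1 ≤ 2 * (q / 2) + 2 := by omega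
    have h3' : (2:ℝ) * ((q / 2 : ℤ) : ℝ) ≤ q := by exact_mod_cast h3
    have h4' : (q:ℝ) + 1 ≤ 2 * ((q / 2 : ℤ) : ℝ) + 2 := by exact_mod_cast h4
    constructor <;> nlinarith
  rw [key, key, h]

lemma floor_mono {n n' : ℤ} (hn : n' ≤ n) {x z : ℝ}
    (h : ⌊(2:ℝ) ^ n * x⌋ = ⌊(2:ℝ) ^ n * z⌋) : ⌊(2:ℝ) ^ n' * x⌋ = ⌊(2:ℝ) ^ n' * z⌋ := by
  obtain ⟨t, rfl⟩ := Int.le.dest hn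
  induction t with
  | zero => simpa using h
  | succ t ih =>
    apply ih (by omega)
    apply floor_succ
    convert h using 4 <;> push_cast <;> ring_nf

lemma dk_eq_indicator (n : ℤ) (x : ℝ) :
    dk n x = Set.indicator (Set.Ico ((⌊(2:ℝ) ^ n * x⌋:ℝ) / 2 ^ n)
      ((⌊(2:ℝ) ^ n * x⌋ + 1) / 2 ^ n)) (fun _ => (2:ℝ) ^ n) := by
  rw [← floor_set]
  ext z
  simp only [dk, Set.indicator, Set.mem_ofPred_eq]

lemma dk_mass (n : ℤ) (x : ℝ) : ∫⁻ z, ENNReal.ofReal (dk n x z) = 1 := by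
  have hc : (0:ℝ) < 2 ^ n := by positivity
  rw [dk_eq_indicator]
  have : (fun z => ENNReal.ofReal (Set.indicator (Set.Ico ((⌊(2:ℝ) ^ n * x⌋:ℝ) / 2 ^ n)
      ((⌊(2:ℝ) ^ n * x⌋ + 1) / 2 ^ n)) (fun _ => (2:ℝ) ^ n) z)) =
      Set.indicator (Set.Ico ((⌊(2:ℝ) ^ n * x⌋:ℝ) / 2 ^ n)
      ((⌊(2:ℝ) ^ n * x⌋ + 1) / 2 ^ n)) (fun _ => ENNReal.ofReal ((2:ℝ) ^ n)) := by
    ext z; simp only [Set.indicator]; split_ifs <;> simp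
  rw [this, lintegral_indicator_const measurableSet_Ico, Real.volume_Ico,
    ← ENNReal.ofReal_mul hc.le, ENNReal.ofReal_eq_one]
  field_simp; ring

lemma dk_measurable (n : ℤ) : Measurable (Function.uncurry (dk n)) := by
  unfold dk
  apply Measurable.ite _ measurable_const measurable_const
  apply measurableSet_eq_fun
  · exact (Int.measurable_floor.comp (measurable_const.mul measurable_fst))
  · exact (Int.measurable_floor.comp (measurable_const.mul measurable_snd))

lemma avgKer_dk (n : ℤ) : AvgKer (dk n) :=
  ⟨dk_measurable n, dk_nonneg n, dk_symm n, fun x => (dk_mass n x).le⟩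

lemma dk_integral (n : ℤ) (x : ℝ) : ∫ z, dk n x z = 1 := by
  rw [integral_eq_lintegral_of_nonneg_ae (by filter_upwards with z using dk_nonneg n x z)
    ((avgKer_dk n).meas_left x).aestronglyMeasurable, dk_mass]
  simp

/-- `W` is constant on dyadic intervals of generation `n`. -/
def DyConst (n : ℤ) (W : ℝ → ℂ) : Prop :=
  ∀ x z, ⌊(2:ℝ) ^ n * x⌋ = ⌊(2:ℝ) ^ n * z⌋ → W x = W z

lemma DyConst.mono {n n' : ℤ} (hn : n' ≤ n) {W : ℝ → ℂ} (h : DyConst n' W) : DyConst n W :=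
  fun x z hxz => h x z (floor_mono hn hxz)

lemma avg_const {n : ℤ} {W : ℝ → ℂ} (h : DyConst n W) (x : ℝ) : avgOp (dk n) W x = W x := by
  unfold avgOp
  have : ∀ z, (dk n x z : ℂ) * W z = (dk n x z : ℂ) * W x := by
    intro z
    by_cases hz : ⌊(2:ℝ) ^ n * x⌋ = ⌊(2:ℝ) ^ n * z⌋
    · rw [h x z hz]
    · simp [dk, hz]
  simp only [this]
  rw [integral_mul_const, integral_complex_ofReal, dk_integral]; simp

lemma dyConst_avg (n : ℤ) (h : ℝ → ℂ) : DyConst n (avgOp (dk n) h) := by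
  intro x z hxz
  unfold avgOp dk
  simp only [hxz]

/-- martingale orthogonality -/
lemma orth {n : ℤ} {W h : ℝ → ℂ} (hW : Measurable W) (hc : DyConst n W) {B : ℝ}
    (hB : ∀ x, ‖W x‖ ≤ B) (hm : Measurable h) (hi : Integrable h) :
    ∫ x, W x * (avgOp (dk (n + 1)) h x - avgOp (dk n) h x) = 0 := by
  have h1 := (avgKer_dk n).adj hm hi hW hB
  have h2 := (avgKer_dk (n + 1)).adj hm hi hW hB
  simp only [avg_const hc] at h1
  simp only [avg_const (hc.mono (by omega : n ≤ n + 1))] at h2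
  simp only [mul_sub]
  rw [integral_sub, h1, h2, sub_self]
  · exact ((avgKer_dk _).integrable_avgOp hm hi).bdd_mul (c := B) hW.aestronglyMeasurable
      (by filter_upwards with p using hB _)
  · exact ((avgKer_dk _).integrable_avgOp hm hi).bdd_mul (c := B) hW.aestronglyMeasurable
      (by filter_upwards with p using hB _)

lemma enorm_le_ofReal {z : ℂ} {a : ℝ} (h : ‖z‖ ≤ a) : ‖z‖ₑ ≤ ENNReal.ofReal a := by
  rw [← ofReal_norm]; exact ENNReal.ofReal_le_ofReal h

section
variable {A : ℝ} {K : ℤ → ℝ → ℂ}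

lemma conv_measurable (hK : GoodKernel A K) (i : ℤ) {h : ℝ → ℂ} (hm : Measurable h) :
    Measurable (conv (K i) h) := by
  have hmm : Measurable (Function.uncurry fun x y : ℝ => K i (x - y) * h y) :=
    ((hK.cont i).measurable.comp (measurable_fst.sub measurable_snd)).mul (hm.comp measurable_snd)
  exact (hmm.stronglyMeasurable.integral_prod_right).measurable

lemma K_bdd (hK : GoodKernel A K) (i : ℤ) (t : ℝ) : ‖K i t‖ ≤ A * 2 ^ i :=
  (hK.size i t).trans (mul_le_mul_of_nonneg_left (wk_le (by positivity) t) hK.nonneg)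

lemma conv_integrand (hK : GoodKernel A K) (i : ℤ) {h : ℝ → ℂ} (hi : Integrable h) (x : ℝ) :
    Integrable (fun y => K i (x - y) * h y) :=
  hi.bdd_mul (c := A * 2 ^ i)
    ((hK.cont i).comp (continuous_const.sub continuous_id)).aestronglyMeasurable
    (by filter_upwards with y using K_bdd hK i _)

lemma conv_enorm_le (hK : GoodKernel A K) (i : ℤ) (h : ℝ → ℂ) (x : ℝ) :
    ‖conv (K i) h x‖ₑ ≤ ∫⁻ y, ENNReal.ofReal (A * wk (2 ^ i) (x - y)) * ‖h y‖ₑ := by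
  refine (enorm_integral_le_lintegral_enorm _).trans (lintegral_mono fun y => ?_)
  rw [enorm_mul]
  gcongr
  exact enorm_le_ofReal (hK.size i _)

lemma wk_meas2 (a c : ℝ) :
    Measurable (Function.uncurry fun x y : ℝ => ENNReal.ofReal (a * wk c (x - y))) :=
  ENNReal.measurable_ofReal.comp (measurable_const.mul
    ((wk_continuous c).measurable.comp (measurable_fst.sub measurable_snd)))

lemma wk_int1 {a : ℝ} (ha : 0 ≤ a) {c : ℝ} (hc : 0 < c) (x : ℝ) :
    ∫⁻ y, ENNReal.ofReal (a * wk c (x - y)) = ENNReal.ofReal (a * Real.pi) := by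
  simp only [ENNReal.ofReal_mul ha]
  rw [lintegral_const_mul', lintegral_wk hc]
  exact ENNReal.ofReal_ne_top

lemma wk_int2 {a : ℝ} (ha : 0 ≤ a) {c : ℝ} (hc : 0 < c) (x : ℝ) :
    ∫⁻ y, ENNReal.ofReal (a * wk c (y - x)) = ENNReal.ofReal (a * Real.pi) := by
  simp only [ENNReal.ofReal_mul ha]
  rw [lintegral_const_mul', lintegral_wk' hc]
  exact ENNReal.ofReal_ne_top

lemma conv_L1 (hK : GoodKernel A K) (i : ℤ) {h : ℝ → ℂ} (hm : Measurable h) :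
    ∫⁻ x, ‖conv (K i) h x‖ₑ ≤ ENNReal.ofReal (A * Real.pi) * ∫⁻ y, ‖h y‖ₑ :=
  schur_L1 (wk_meas2 A (2 ^ i)) hm.enorm (conv_enorm_le hK i h)
    (fun y => (wk_int2 hK.nonneg (by positivity) y).le)

lemma conv_L2 (hK : GoodKernel A K) (i : ℤ) {h : ℝ → ℂ} (hm : Measurable h) :
    ∫⁻ x, ‖conv (K i) h x‖ₑ ^ 2 ≤
      ENNReal.ofReal (A * Real.pi) * ENNReal.ofReal (A * Real.pi) * ∫⁻ y, ‖h y‖ₑ ^ 2 :=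
  schur_L2 (wk_meas2 A (2 ^ i)) hm.enorm (conv_enorm_le hK i h)
    (fun y => (wk_int1 hK.nonneg (by positivity) y).le)
    (fun y => (wk_int2 hK.nonneg (by positivity) y).le)

lemma conv_integrable (hK : GoodKernel A K) (i : ℤ) {h : ℝ → ℂ} (hm : Measurable h)
    (hi : Integrable h) : Integrable (conv (K i) h) :=
  ⟨(conv_measurable hK i hm).aestronglyMeasurable,
    (conv_L1 hK i hm).trans_lt (ENNReal.mul_lt_top ENNReal.ofReal_lt_top hi.2)⟩

/-- low frequency: `h - E_n h` is small -/
lemma low_L2 (hK : GoodKernel A K) {i n : ℤ} (hin : i ≤ n) {h : ℝ → ℂ} (hm : Measurable h)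
    (hi : Integrable h) :
    ∫⁻ x, ‖conv (K i) h x - avgOp (dk n) (conv (K i) h) x‖ₑ ^ 2 ≤
      ENNReal.ofReal (A * 2 ^ (i - n) * Real.pi) * ENNReal.ofReal (A * 2 ^ (i - n) * Real.pi)
        * ∫⁻ y, ‖h y‖ₑ ^ 2 := by
  have hA := hK.nonneg
  have hA' : 0 ≤ A * 2 ^ (i - n) := by positivity
  have hpt : ∀ x z, ⌊(2:ℝ) ^ n * x⌋ = ⌊(2:ℝ) ^ n * z⌋ →
      ‖conv (K i) h x - conv (K i) h z‖ₑ ≤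
        ∫⁻ y, ENNReal.ofReal (A * 2 ^ (i - n) * wk (2 ^ i) (x - y)) * ‖h y‖ₑ := by
    intro x z hxz
    have hc := floor_close hxz
    have e : (2:ℝ) ^ i = 2 ^ (i - n) * 2 ^ n := by rw [← zpow_add₀ (by norm_num)]; simp
    have h1 : (2:ℝ) ^ (i - n) ≤ 1 := zpow_le_one_of_nonpos₀ (by norm_num) (by omega)
    have h2 : (2:ℝ) ^ i * |x - z| ≤ 2 ^ (i - n) := by
      rw [e, mul_assoc]
      have : (0:ℝ) < 2 ^ (i - n) := by positivity
      nlinarith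
    unfold conv
    rw [← integral_sub (conv_integrand hK i hi x) (conv_integrand hK i hi z)]
    refine (enorm_integral_le_lintegral_enorm _).trans (lintegral_mono fun y => ?_)
    rw [← sub_mul, enorm_mul]
    gcongr
    apply enorm_le_ofReal
    have hs := hK.smooth i (z - y) (x - y) (by
      rw [sub_sub_sub_cancel_right, abs_sub_comm]; exact h2.trans h1)
    rw [norm_sub_rev, sub_sub_sub_cancel_right, abs_sub_comm] at hs
    refine hs.trans ?_
    have := wk_nonneg (c := (2:ℝ) ^ i) (by positivity) (x - y)
    gcongr
  refine schur_L2 (wk_meas2 (A * 2 ^ (i - n)) (2 ^ i)) hm.enorm ?_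
    (fun y => (wk_int1 hA' (by positivity) y).le)
    (fun y => (wk_int2 hA' (by positivity) y).le)
  intro x
  set J := ∫⁻ y, ENNReal.ofReal (A * 2 ^ (i - n) * wk (2 ^ i) (x - y)) * ‖h y‖ₑ
  have e1 : conv (K i) h x - avgOp (dk n) (conv (K i) h) x =
      ∫ z, (dk n x z : ℂ) * (conv (K i) h x - conv (K i) h z) := by
    simp only [mul_sub]
    rw [integral_sub]
    · rw [integral_mul_const, integral_complex_ofReal, dk_integral]
      simp [avgOp]
    · exact ((avgKer_dk n).integrable_ker x).ofReal.mul_const _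
    · refine (conv_integrable hK i hm hi).bdd_mul (c := 2 ^ n)
        (Complex.measurable_ofReal.comp ((avgKer_dk n).meas_left x)).aestronglyMeasurable ?_
      filter_upwards with z
      rw [Complex.norm_real, Real.norm_of_nonneg (dk_nonneg _ _ _)]
      unfold dk; split_ifs
      · exact le_rfl
      · positivity
  rw [e1]
  calc _ ≤ ∫⁻ z, ‖(dk n x z : ℂ) * (conv (K i) h x - conv (K i) h z)‖ₑ :=
        enorm_integral_le_lintegral_enorm _
    _ ≤ ∫⁻ z, ENNReal.ofReal (dk n x z) * J := by
        refine lintegral_mono fun z => ?_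
        rw [enorm_ofReal_mul (dk_nonneg _ _ _)]
        by_cases hz : ⌊(2:ℝ) ^ n * x⌋ = ⌊(2:ℝ) ^ n * z⌋
        · gcongr; exact hpt x z hz
        · simp [dk, hz]
    _ = J := by
        rw [lintegral_mul_const _ ((avgKer_dk n).meas_left x).ennreal_ofReal, dk_mass, one_mul]

/-- high frequency : `E_n h` is small -/
lemma high_L2 (hK : GoodKernel A K) {i n : ℤ} (hin : n ≤ i) {h : ℝ → ℂ} (hm : Measurable h)
    (hi : Integrable h) :
    ∫⁻ x, ‖avgOp (dk n) (conv (K i) h) x‖ₑ ^ 2 ≤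
      ENNReal.ofReal (2 * (A * 2 ^ (n - i) * Real.pi)) * ENNReal.ofReal (6 * (A * Real.pi))
        * ∫⁻ y, ‖h y‖ₑ ^ 2 := by
  have hA := hK.nonneg
  have hn : (0:ℝ) < 2 ^ n := by positivity
  have hi0 : (0:ℝ) < 2 ^ i := by positivity
  set la : ℝ → ℝ := fun x => (⌊(2:ℝ) ^ n * x⌋:ℝ) / 2 ^ n with hla
  set lb : ℝ → ℝ := fun x => (⌊(2:ℝ) ^ n * x⌋ + 1:ℝ) / 2 ^ n with hlb
  have hlam : Measurable la :=
    ((measurable_from_top (f := fun m : ℤ => (m:ℝ))).comp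
      (Int.measurable_floor.comp (measurable_const.mul measurable_id))).div_const _
  have hlbm : Measurable lb :=
    (((measurable_from_top (f := fun m : ℤ => (m:ℝ))).comp
      (Int.measurable_floor.comp (measurable_const.mul measurable_id))).add_const 1).div_const _
  have e0 : (2:ℝ) ^ n = 2 ^ (n - i) * 2 ^ i := by rw [← zpow_add₀ (by norm_num)]; simp
  set k : ℝ → ℝ → ℝ≥0∞ := fun x y =>
    ENNReal.ofReal (A * 2 ^ (n - i) * wk (2 ^ i) (la x - y)) +
    ENNReal.ofReal (A * 2 ^ (n - i) * wk (2 ^ i) (lb x - y)) with hk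
  have hka : 0 ≤ A * (2:ℝ) ^ (n - i) := by positivity
  have hkm1 := (wk_meas2 (A * 2 ^ (n - i)) (2 ^ i)).comp
    ((hlam.comp measurable_fst).prodMk (measurable_snd (α := ℝ) (β := ℝ)))
  have hkm2 := (wk_meas2 (A * 2 ^ (n - i)) (2 ^ i)).comp
    ((hlbm.comp measurable_fst).prodMk (measurable_snd (α := ℝ) (β := ℝ)))
  have hcompare : ∀ x a y, (2:ℝ) ^ n * |a - x| ≤ 1 →
      ENNReal.ofReal (A * 2 ^ (n - i) * wk (2 ^ i) (a - y)) ≤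
      ENNReal.ofReal (3 * A * wk (2 ^ n) (x - y)) := by
    intro x a y hax
    apply ENNReal.ofReal_le_ofReal
    unfold wk
    have h1 : th (2 ^ i * (a - y)) ≤ th (2 ^ n * (a - y)) := by
      apply th_anti
      rw [abs_mul, abs_mul, abs_of_pos hn, abs_of_pos hi0]
      gcongr
      · norm_num
    have h2 : th (2 ^ n * (a - y)) ≤ 3 * th (2 ^ n * (x - y)) := by
      apply th_le_three
      rw [← mul_sub, abs_mul, abs_of_pos hn]; simpa using hax
    calc A * 2 ^ (n - i) * (2 ^ i * th (2 ^ i * (a - y)))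
        = A * 2 ^ n * th (2 ^ i * (a - y)) := by rw [e0]; ring
      _ ≤ A * 2 ^ n * (3 * th (2 ^ n * (x - y))) := by
          gcongr
          exact h1.trans h2
      _ = _ := by ring
  refine schur_L2 (k := k) (hkm1.add hkm2) hm.enorm ?_ ?_ ?_
  · intro x
    have hfub : Integrable (fun p : ℝ × ℝ => (dk n x p.1 : ℂ) * (K i (p.1 - p.2) * h p.2))
        (volume.prod volume) := by
      have h1 : Integrable (fun p : ℝ × ℝ => (dk n x p.1 : ℂ) * h p.2) (volume.prod volume) :=
        ((avgKer_dk n).integrable_ker x).ofReal.mul_prod hi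
      have h2 := h1.bdd_mul (f := fun p : ℝ × ℝ => K i (p.1 - p.2)) (c := A * 2 ^ i)
        ((hK.cont i).comp (continuous_fst.sub continuous_snd)).aestronglyMeasurable
        (by filter_upwards with y using K_bdd hK i _)
      refine h2.congr (by filter_upwards with p; ring)
    have e1 : avgOp (dk n) (conv (K i) h) x = ∫ y, (∫ z, (dk n x z : ℂ) * K i (z - y)) * h y := by
      calc avgOp (dk n) (conv (K i) h) x
          = ∫ z, ∫ y, (dk n x z : ℂ) * (K i (z - y) * h y) := by
            unfold avgOp conv; congr 1; ext z; rw [integral_const_mul]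
        _ = ∫ y, ∫ z, (dk n x z : ℂ) * (K i (z - y) * h y) := integral_integral_swap hfub
        _ = _ := by
            congr 1; ext y; rw [← integral_mul_const]; congr 1; ext z; ring
    rw [e1]
    refine (enorm_integral_le_lintegral_enorm _).trans (lintegral_mono fun y => ?_)
    rw [enorm_mul]
    gcongr
    have e2 : ∫ z, (dk n x z : ℂ) * K i (z - y) = (2 ^ n : ℝ) * ∫ t in (la x - y)..(lb x - y), K i t := by
      rw [← intervalIntegral.integral_comp_sub_right (fun t => K i t) y,
        intervalIntegral.integral_of_le (by
          simp only [hla, hlb]; gcongr; linarith), ← integral_Ico_eq_integral_Ioc,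
        ← integral_const_mul, ← integral_indicator measurableSet_Ico]
      congr 1; ext z
      rw [dk_eq_indicator]
      simp only [Set.indicator, hla, hlb]
      split_ifs <;> simp
    rw [e2, hk]
    simp only
    rw [← ENNReal.ofReal_add (mul_nonneg hka (wk_nonneg hi0 _)) (mul_nonneg hka (wk_nonneg hi0 _))]
    apply enorm_le_ofReal
    rw [norm_mul, Complex.norm_real, Real.norm_of_nonneg hn.le]
    refine (mul_le_mul_of_nonneg_left (hK.cancel i _ _) hn.le).trans_eq ?_
    unfold wk; rw [e0]; ring
  · intro x
    rw [hk]
    simp only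
    rw [lintegral_add_left (hkm1.of_uncurry_left (f := fun x y => ENNReal.ofReal (A * 2 ^ (n - i) * wk (2 ^ i) (la x - y)))), wk_int1 hka hi0, wk_int1 hka hi0, ← ENNReal.ofReal_add (by positivity) (by positivity)]
    apply ENNReal.ofReal_le_ofReal; linarith
  · intro y
    have h3A : 0 ≤ 3 * A := by positivity
    calc ∫⁻ x, k x y ≤ ∫⁻ x, (ENNReal.ofReal (3 * A * wk (2 ^ n) (x - y)) +
          ENNReal.ofReal (3 * A * wk (2 ^ n) (x - y))) := by
          apply lintegral_mono; intro x
          have h1 := Int.floor_le ((2:ℝ) ^ n * x)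
          have h2 := Int.lt_floor_add_one ((2:ℝ) ^ n * x)
          apply add_le_add
          · apply hcompare
            have e3 : (2:ℝ) ^ n * |la x - x| = |(2:ℝ) ^ n * la x - 2 ^ n * x| := by
              rw [← mul_sub, abs_mul, abs_of_pos hn]
            rw [e3]
            simp only [hla]
            rw [mul_div_cancel₀ _ hn.ne', abs_le]
            constructor <;> linarith
          · apply hcompare
            have e3 : (2:ℝ) ^ n * |lb x - x| = |(2:ℝ) ^ n * lb x - 2 ^ n * x| := by
              rw [← mul_sub, abs_mul, abs_of_pos hn]
            rw [e3]
            simp only [hlb]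
            rw [mul_div_cancel₀ _ hn.ne', abs_le]
            constructor <;> linarith
      _ = _ := by
          rw [lintegral_add_left ((wk_meas2 (3 * A) (2 ^ n)).of_uncurry_right
            (f := fun x y => ENNReal.ofReal (3 * A * wk (2 ^ n) (x - y)))), wk_int2 h3A hn,
            ← ENNReal.ofReal_add (by positivity) (by positivity)]
          congr 1; ring

/-- The error functions. -/
def qerr (K : ℤ → ℝ → ℂ) (u : ℤ → ℝ → ℂ) (n i : ℤ) (x : ℝ) : ℂ :=
  (if i ≤ n then conv (K i) (u i) x else 0) - avgOp (dk n) (conv (K i) (u i)) x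

lemma qerr_L2 (hK : GoodKernel A K) (n i : ℤ) {u : ℤ → ℝ → ℂ} (hm : ∀ i, Measurable (u i))
    (hi : ∀ i, Integrable (u i)) :
    ∫⁻ x, ‖qerr K u n i x‖ₑ ^ 2 ≤
      ENNReal.ofReal (12 * (A * Real.pi) ^ 2) * ENNReal.ofReal (2 ^ (-|n - i|)) *
        ∫⁻ y, ‖u i y‖ₑ ^ 2 := by
  have hA := hK.nonneg
  unfold qerr
  by_cases h : i ≤ n
  · simp only [h, if_true]
    refine (low_L2 hK h (hm i) (hi i)).trans ?_
    refine mul_le_mul_left ?_ _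
    rw [← ENNReal.ofReal_mul (by positivity), ← ENNReal.ofReal_mul (by positivity)]
    apply ENNReal.ofReal_le_ofReal
    rw [abs_of_nonneg (by omega), neg_sub]
    have h1 : (2:ℝ) ^ (i - n) ≤ 1 := zpow_le_one_of_nonpos₀ (by norm_num) (by omega)
    have h0 : (0:ℝ) < 2 ^ (i - n) := by positivity
    have h3 : 0 ≤ (A * Real.pi) ^ 2 * 2 ^ (i - n) := by positivity
    calc _ = (A * Real.pi) ^ 2 * 2 ^ (i - n) * 2 ^ (i - n) := by ring
      _ ≤ (A * Real.pi) ^ 2 * 2 ^ (i - n) * 1 := by gcongr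
      _ ≤ _ := by linarith
  · simp only [h, if_false, zero_sub, enorm_neg]
    refine (high_L2 hK (by omega) (hm i) (hi i)).trans ?_
    refine mul_le_mul_left ?_ _
    rw [← ENNReal.ofReal_mul (by positivity), ← ENNReal.ofReal_mul (by positivity)]
    apply ENNReal.ofReal_le_ofReal
    rw [abs_of_neg (by omega), neg_neg]
    apply le_of_eq; ring

end

/-- two-sided geometric sum -/
def gsum (β : ℝ) : ℝ≥0∞ := ∑' j : ℤ, ENNReal.ofReal (β ^ j.natAbs)

lemma gsum_lt_top {β : ℝ} (h0 : 0 ≤ β) (h1 : β < 1) : gsum β < ⊤ := by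
  have hs : Summable (fun j : ℤ => β ^ j.natAbs) := by
    apply Summable.of_nat_of_neg
    · simpa using summable_geometric_of_lt_one h0 h1
    · simpa using summable_geometric_of_lt_one h0 h1
  exact hs.tsum_ofReal_lt_top

lemma gsum_shift (β : ℝ) (m : ℤ) : ∑' j : ℤ, ENNReal.ofReal (β ^ (j - m).natAbs) = gsum β :=
  (Equiv.subRight m).tsum_eq (fun j : ℤ => ENNReal.ofReal (β ^ j.natAbs))

lemma gsum_finset (β : ℝ) (m : ℤ) (s : Finset ℤ) :
    ∑ j ∈ s, ENNReal.ofReal (β ^ (j - m).natAbs) ≤ gsum β :=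
  (ENNReal.sum_le_tsum s).trans_eq (gsum_shift β m)

lemma gsum_finset' (β : ℝ) (m : ℤ) (s : Finset ℤ) :
    ∑ j ∈ s, ENNReal.ofReal (β ^ (m - j).natAbs) ≤ gsum β := by
  refine le_trans (le_of_eq ?_) (gsum_finset β m s)
  refine Finset.sum_congr rfl fun j _ => ?_
  rw [← Int.natAbs_neg, neg_sub]

lemma enorm_sq (z : ℂ) : ‖z‖ₑ ^ 2 = ENNReal.ofReal (‖z‖ ^ 2) := by
  rw [← ofReal_norm, ENNReal.ofReal_pow (norm_nonneg _)]

lemma qerr_measurable {A : ℝ} {K : ℤ → ℝ → ℂ} (hK : GoodKernel A K) (n i : ℤ) {u : ℤ → ℝ → ℂ}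
    (hm : ∀ i, Measurable (u i)) : Measurable (qerr K u n i) := by
  unfold qerr
  refine Measurable.sub ?_ ((avgKer_dk n).measurable_avgOp (conv_measurable hK i (hm i)))
  split_ifs
  · exact conv_measurable hK i (hm i)
  · exact measurable_const

/-- total error -/
def rerr (K : ℤ → ℝ → ℂ) (u : ℤ → ℝ → ℂ) (I : Finset ℤ) (n : ℤ) (x : ℝ) : ℂ :=
  ∑ i ∈ I, qerr K u n i x

lemma rerr_measurable {A : ℝ} {K : ℤ → ℝ → ℂ} (hK : GoodKernel A K) (I : Finset ℤ) (n : ℤ)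
    {u : ℤ → ℝ → ℂ} (hm : ∀ i, Measurable (u i)) : Measurable (rerr K u I n) := by
  unfold rerr
  exact Finset.measurable_fun_sum _ fun i _ => qerr_measurable hK n i hm

lemma rerr_pt (q : ℤ → ℂ) (I : Finset ℤ) (n : ℤ) :
    ‖∑ i ∈ I, q i‖ₑ ^ 2 ≤ gsum (3/4) *
      ∑ i ∈ I, ENNReal.ofReal ((4/3:ℝ) ^ (n - i).natAbs) * ‖q i‖ₑ ^ 2 := by
  have h1 : ‖∑ i ∈ I, q i‖ ^ 2 ≤ (∑ i ∈ I, (3/4:ℝ) ^ (n - i).natAbs) *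
      ∑ i ∈ I, (4/3:ℝ) ^ (n - i).natAbs * ‖q i‖ ^ 2 := by
    refine (pow_le_pow_left₀ (norm_nonneg _) (norm_sum_le _ _) 2).trans ?_
    apply Finset.sum_sq_le_sum_mul_sum_of_sq_eq_mul
    · intro i _; positivity
    · intro i _; positivity
    · intro i _
      rw [← mul_assoc, ← mul_pow]; norm_num
  rw [enorm_sq]
  refine (ENNReal.ofReal_le_ofReal h1).trans ?_
  rw [ENNReal.ofReal_mul (Finset.sum_nonneg fun i _ => by positivity),
    ENNReal.ofReal_sum_of_nonneg (fun i _ => by positivity),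
    ENNReal.ofReal_sum_of_nonneg (fun i _ => by positivity)]
  refine mul_le_mul' (gsum_finset' _ _ _) (le_of_eq (Finset.sum_congr rfl fun i _ => ?_))
  rw [ENNReal.ofReal_mul (by positivity), enorm_sq]

/-- The constant in the square-function bound -/
def cR (A : ℝ) : ℝ≥0∞ := gsum (3/4) * ENNReal.ofReal (12 * (A * Real.pi) ^ 2) * gsum (2/3)

lemma rerr_L2 {A : ℝ} {K : ℤ → ℝ → ℂ} (hK : GoodKernel A K) (I J : Finset ℤ)
    {u : ℤ → ℝ → ℂ} (hm : ∀ i, Measurable (u i)) (hi : ∀ i, Integrable (u i)) :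
    ∑ n ∈ J, ∫⁻ x, ‖rerr K u I n x‖ₑ ^ 2 ≤ cR A * ∑ i ∈ I, ∫⁻ y, ‖u i y‖ₑ ^ 2 := by
  set D := ENNReal.ofReal (12 * (A * Real.pi) ^ 2)
  have step : ∀ n, ∫⁻ x, ‖rerr K u I n x‖ₑ ^ 2 ≤ gsum (3/4) *
      ∑ i ∈ I, D * ENNReal.ofReal ((2/3:ℝ) ^ (n - i).natAbs) * ∫⁻ y, ‖u i y‖ₑ ^ 2 := by
    intro n
    calc ∫⁻ x, ‖rerr K u I n x‖ₑ ^ 2 ≤ ∫⁻ x, gsum (3/4) *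
        ∑ i ∈ I, ENNReal.ofReal ((4/3:ℝ) ^ (n - i).natAbs) * ‖qerr K u n i x‖ₑ ^ 2 :=
          lintegral_mono fun x => rerr_pt _ I n
      _ = gsum (3/4) * ∑ i ∈ I, ENNReal.ofReal ((4/3:ℝ) ^ (n - i).natAbs) *
          ∫⁻ x, ‖qerr K u n i x‖ₑ ^ 2 := by
          have hq := fun i => (qerr_measurable hK n i hm).enorm.pow_const 2
          rw [lintegral_const_mul _ (Finset.measurable_fun_sum _ fun i _ => (hq i).const_mul _),
            lintegral_finsetSum _ (fun i _ => (hq i).const_mul _)]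
          congr 1
          refine Finset.sum_congr rfl fun i _ => ?_
          rw [lintegral_const_mul _ (hq i)]
      _ ≤ _ := by
          refine mul_le_mul_right (Finset.sum_le_sum fun i _ => ?_) _
          refine (mul_le_mul_right (qerr_L2 hK n i hm hi) _).trans_eq ?_
          rw [← mul_assoc, mul_left_comm, ← mul_assoc]
          congr 1
          rw [mul_assoc, ← ENNReal.ofReal_mul (by positivity)]
          congr 2
          rw [← Int.natCast_natAbs, zpow_neg, zpow_natCast, ← inv_pow, ← mul_pow]
          norm_num
  calc ∑ n ∈ J, ∫⁻ x, ‖rerr K u I n x‖ₑ ^ 2 ≤ ∑ n ∈ J, gsum (3/4) *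
      ∑ i ∈ I, D * ENNReal.ofReal ((2/3:ℝ) ^ (n - i).natAbs) * ∫⁻ y, ‖u i y‖ₑ ^ 2 :=
        Finset.sum_le_sum fun n _ => step n
    _ = gsum (3/4) * ∑ i ∈ I, D * (∑ n ∈ J, ENNReal.ofReal ((2/3:ℝ) ^ (n - i).natAbs)) *
          ∫⁻ y, ‖u i y‖ₑ ^ 2 := by
        rw [← Finset.mul_sum, Finset.sum_comm]
        congr 1
        refine Finset.sum_congr rfl fun i _ => ?_
        rw [Finset.mul_sum, Finset.sum_mul]
    _ ≤ gsum (3/4) * ∑ i ∈ I, D * gsum (2/3) * ∫⁻ y, ‖u i y‖ₑ ^ 2 := by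
        gcongr
        exact gsum_finset _ _ _
    _ = _ := by
        rw [← Finset.mul_sum, cR]; ring

/-- greedy stopping : current value and counter. -/
def greedy (c : ℝ) (e : ℕ → ℂ) : ℕ → ℂ × ℕ
  | 0 => (e 0, 0)
  | t + 1 => if c ≤ ‖e (t + 1) - (greedy c e t).1‖ then (e (t + 1), (greedy c e t).2 + 1)
      else greedy c e t

lemma greedy_close {c : ℝ} (hc : 0 < c) (e : ℕ → ℂ) (t : ℕ) : ‖e t - (greedy c e t).1‖ < c := by
  cases t with
  | zero => simpa [greedy] using hc
  | succ t =>
    simp only [greedy]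
    split_ifs with h
    · simpa using hc
    · exact not_le.1 h

lemma greedy_mono (c : ℝ) (e : ℕ → ℂ) : Monotone (fun t => (greedy c e t).2) := by
  apply monotone_nat_of_le_succ
  intro t
  simp only [greedy]
  split_ifs <;> simp

lemma greedy_const (c : ℝ) (e : ℕ → ℂ) {p q : ℕ} (hpq : p ≤ q)
    (h : (greedy c e q).2 = (greedy c e p).2) : (greedy c e q).1 = (greedy c e p).1 := by
  induction q, hpq using Nat.le_induction with
  | base => rfl
  | succ q hq ih =>
    have h1 := greedy_mono c e hq
    simp only [greedy] at h ⊢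
    split_ifs at h ⊢ with h2
    · simp only at h h1; omega
    · exact ih h

lemma greedy_jump {c : ℝ} (hc : 0 < c) (e : ℕ → ℂ) {p q : ℕ} (hpq : p ≤ q)
    (h : 2 * c ≤ ‖e q - e p‖) : (greedy c e p).2 + 1 ≤ (greedy c e q).2 := by
  by_contra hcon
  have h1 : (greedy c e p).2 ≤ (greedy c e q).2 := greedy_mono c e hpq
  have h2 := greedy_const c e hpq (by omega)
  have h3 := greedy_close hc e p
  have h4 := greedy_close hc e q
  rw [h2] at h4
  have := norm_sub_le (e q - (greedy c e p).1) (e p - (greedy c e p).1)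
  rw [sub_sub_sub_cancel_right] at this
  linarith

lemma greedy_potential {c : ℝ} (e : ℕ → ℂ) (T : ℕ) :
    c ^ 2 * (greedy c e T).2 + ‖e T - (greedy c e T).1‖ ^ 2 ≤
      ∑ t ∈ Finset.range T, (2 * ((starRingEnd ℂ) (e t - (greedy c e t).1) *
        (e (t + 1) - e t)).re + ‖e (t + 1) - e t‖ ^ 2) ∨ c < 0 := by
  by_cases hc : c < 0
  · exact Or.inr hc
  left
  push Not at hc
  induction T with
  | zero => simp [greedy]
  | succ T ih =>
    rw [Finset.sum_range_succ]
    have key : ‖e (T + 1) - (greedy c e T).1‖ ^ 2 = ‖e T - (greedy c e T).1‖ ^ 2 +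
      (2 * ((starRingEnd ℂ) (e T - (greedy c e T).1) *
        (e (T + 1) - e T)).re + ‖e (T + 1) - e T‖ ^ 2) := by
      have : e (T + 1) - (greedy c e T).1 = (e T - (greedy c e T).1) + (e (T + 1) - e T) := by ring
      rw [this]
      generalize e T - (greedy c e T).1 = a
      generalize e (T + 1) - e T = b
      simp only [← Complex.normSq_eq_norm_sq, Complex.normSq_apply, Complex.add_re, Complex.add_im,
        Complex.mul_re, Complex.conj_re, Complex.conj_im]
      ring
    have h2 : c ^ 2 * ((greedy c e (T + 1)).2 : ℝ) + ‖e (T + 1) - (greedy c e (T + 1)).1‖ ^ 2 ≤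
        c ^ 2 * (greedy c e T).2 + ‖e (T + 1) - (greedy c e T).1‖ ^ 2 := by
      simp only [greedy]
      split_ifs with h
      · have : c ^ 2 ≤ ‖e (T + 1) - (greedy c e T).1‖ ^ 2 := pow_le_pow_left₀ hc h 2
        simp only [sub_self, norm_zero, Nat.cast_add, Nat.cast_one]
        nlinarith
      · exact le_rfl
    linarith

lemma greedy_measurable (c : ℝ) {e : ℕ → ℝ → ℂ} (he : ∀ t, Measurable (e t)) (t : ℕ) :
    Measurable (fun x => greedy c (fun t => e t x) t) := by
  induction t with
  | zero => exact (he 0).prodMk measurable_const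
  | succ t ih =>
    simp only [greedy]
    refine Measurable.ite ?_ ((he _).prodMk (ih.snd.add_const 1)) ih
    exact measurableSet_le measurable_const ((he _).sub ih.fst).norm

lemma greedy_dyConst (c : ℝ) (s : ℤ) {e : ℕ → ℝ → ℂ} (he : ∀ t : ℕ, DyConst (s + t) (e t)) (t : ℕ)
    (x z : ℝ) (hxz : ⌊(2:ℝ) ^ (s + t) * x⌋ = ⌊(2:ℝ) ^ (s + t) * z⌋) :
    greedy c (fun t => e t x) t = greedy c (fun t => e t z) t := by
  induction t with
  | zero => simp [greedy, he 0 x z hxz]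
  | succ t ih =>
    have h1 := ih (floor_mono (by push_cast; omega) hxz)
    simp only [greedy, h1, he (t + 1) x z hxz]

lemma martingale_count {F : ℝ → ℂ} (hm : Measurable F) (hi : Integrable F) (s : ℤ) {c : ℝ}
    (hc : 0 < c) (T : ℕ) :
    ∫⁻ x, ENNReal.ofReal (c ^ 2 *
      (greedy c (fun t : ℕ => avgOp (dk (s + t)) F x) T).2) ≤
    ∑ t ∈ Finset.range T, ∫⁻ x, ‖avgOp (dk (s + t + 1)) F x - avgOp (dk (s + t)) F x‖ₑ ^ 2 := by
  set e : ℕ → ℝ → ℂ := fun t x => avgOp (dk (s + t)) F x with he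
  have hem : ∀ t, Measurable (e t) := fun t => (avgKer_dk _).measurable_avgOp hm
  have hei : ∀ t, Integrable (e t) := fun t => (avgKer_dk _).integrable_avgOp hm hi
  have hed : ∀ t : ℕ, DyConst (s + t) (e t) := fun t => dyConst_avg _ _
  have hsucc : ∀ t : ℕ, avgOp (dk (s + t + 1)) F = e (t + 1) := by
    intro t; ext x; simp only [he]; push_cast; rw [add_assoc]
  simp only [hsucc]
  change ∫⁻ x, ENNReal.ofReal (c ^ 2 * (greedy c (fun t : ℕ => e t x) T).2) ≤
    ∑ t ∈ Finset.range T, ∫⁻ x, ‖e (t + 1) x - e t x‖ₑ ^ 2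
  by_cases htop : ∀ t ∈ Finset.range T, ∫⁻ x, ‖e (t + 1) x - e t x‖ₑ ^ 2 < ⊤
  swap
  · push Not at htop
    obtain ⟨t, ht, h⟩ := htop
    exact le_top.trans ((h.trans (Finset.single_le_sum
      (f := fun t => ∫⁻ x, ‖e (t + 1) x - e t x‖ₑ ^ 2) (fun _ _ => zero_le) ht)))
  have hsqi : ∀ t ∈ Finset.range T, Integrable (fun x => ‖e (t + 1) x - e t x‖ ^ 2) := by
    intro t ht
    refine ⟨(((hem _).sub (hem _)).norm.pow_const 2).aestronglyMeasurable, ?_⟩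
    rw [hasFiniteIntegral_iff_ofReal (by filter_upwards with x; positivity)]
    simpa only [enorm_sq] using htop t ht
  set W : ℕ → ℝ → ℂ := fun t x => (starRingEnd ℂ) (e t x - (greedy c (fun t => e t x) t).1) with hW
  have hWm : ∀ t, Measurable (W t) := fun t =>
    Complex.continuous_conj.measurable.comp ((hem t).sub (greedy_measurable c hem t).fst)
  have hWb : ∀ t x, ‖W t x‖ ≤ c := by
    intro t x
    simp only [hW, RCLike.norm_conj]
    exact (greedy_close hc (fun t => e t x) t).le
  have hWd : ∀ t : ℕ, DyConst (s + t) (W t) := by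
    intro t x z hxz
    simp only [hW, hed t x z hxz, greedy_dyConst c s hed t x z hxz]
  have hWi : ∀ t, Integrable (fun x => W t x * (e (t + 1) x - e t x)) := fun t =>
    ((hei (t + 1)).sub (hei t)).bdd_mul (c := c) (hWm t).aestronglyMeasurable
      (by filter_upwards with x using hWb t x)
  have hW0 : ∀ t, ∫ x, (W t x * (e (t + 1) x - e t x)).re = 0 := by
    intro t
    have h1 := orth (hWm t) (hWd t) (hWb t) hm hi
    rw [hsucc] at h1
    have h2 := integral_re (hWi t)
    simp only [RCLike.re_to_complex] at h2
    rw [h2]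
    change (∫ x, W t x * (e (t + 1) x - e t x)).re = 0
    rw [show (∫ x, W t x * (e (t + 1) x - e t x)) = 0 from h1]; rfl
  have hgi : ∀ t ∈ Finset.range T, Integrable (fun x => 2 * (W t x * (e (t + 1) x - e t x)).re +
      ‖e (t + 1) x - e t x‖ ^ 2) := fun t ht =>
    ((hWi t).re.const_mul 2).add (hsqi t ht)
  have hpt : ∀ x, c ^ 2 * ((greedy c (fun t => e t x) T).2 : ℝ) ≤ ∑ t ∈ Finset.range T,
      (2 * (W t x * (e (t + 1) x - e t x)).re + ‖e (t + 1) x - e t x‖ ^ 2) := by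
    intro x
    rcases greedy_potential (c := c) (fun t => e t x) T with h | h
    · refine le_trans ?_ h
      have : 0 ≤ ‖e T x - (greedy c (fun t => e t x) T).1‖ ^ 2 := by positivity
      linarith
    · linarith
  calc _ ≤ ∫⁻ x, ENNReal.ofReal (∑ t ∈ Finset.range T,
      (2 * (W t x * (e (t + 1) x - e t x)).re + ‖e (t + 1) x - e t x‖ ^ 2)) :=
        lintegral_mono fun x => ENNReal.ofReal_le_ofReal (hpt x)
    _ = ENNReal.ofReal (∫ x, ∑ t ∈ Finset.range T,
      (2 * (W t x * (e (t + 1) x - e t x)).re + ‖e (t + 1) x - e t x‖ ^ 2)) := by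
        rw [ofReal_integral_eq_lintegral_ofReal (integrable_finsetSum _ hgi)]
        filter_upwards with x
        refine le_trans ?_ (hpt x)
        simp only [Pi.zero_apply]; positivity
    _ = ENNReal.ofReal (∑ t ∈ Finset.range T, ∫ x, ‖e (t + 1) x - e t x‖ ^ 2) := by
        rw [integral_finsetSum _ hgi]
        congr 1
        refine Finset.sum_congr rfl fun t ht => ?_
        have hre : Integrable (fun x => (W t x * (e (t + 1) x - e t x)).re) := (hWi t).re
        rw [integral_add (hre.const_mul 2) (hsqi t ht), integral_const_mul, hW0 t]
        simp
    _ = _ := by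
        rw [ENNReal.ofReal_sum_of_nonneg (fun t _ => integral_nonneg fun x => by positivity)]
        refine Finset.sum_congr rfl fun t ht => ?_
        rw [ofReal_integral_eq_lintegral_ofReal (hsqi t ht) (by filter_upwards with x; positivity)]
        simp only [enorm_sq]

section
variable {A : ℝ} {K : ℤ → ℝ → ℂ}

/-- the sum of all the pieces in a finite set of frequencies -/
def csum (K : ℤ → ℝ → ℂ) (u : ℤ → ℝ → ℂ) (I : Finset ℤ) (x : ℝ) : ℂ :=
  ∑ i ∈ I, conv (K i) (u i) x

lemma csum_measurable (hK : GoodKernel A K) {u : ℤ → ℝ → ℂ} (hm : ∀ i, Measurable (u i))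
    (I : Finset ℤ) : Measurable (csum K u I) := by
  unfold csum
  exact Finset.measurable_fun_sum _ fun i _ => conv_measurable hK i (hm i)

lemma csum_integrable (hK : GoodKernel A K) {u : ℤ → ℝ → ℂ} (hm : ∀ i, Measurable (u i))
    (hi : ∀ i, Integrable (u i)) (I : Finset ℤ) : Integrable (csum K u I) := by
  unfold csum
  exact integrable_finsetSum _ fun i _ => conv_integrable hK i (hm i) (hi i)

lemma dk_le (n : ℤ) (x z : ℝ) : dk n x z ≤ 2 ^ n := by
  unfold dk; split_ifs
  · exact le_rfl
  · positivity

lemma AvgKer.integrable_mul {κ : ℝ → ℝ → ℝ} (hκ : AvgKer κ) {x B : ℝ} (hB : ∀ z, κ x z ≤ B)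
    {h : ℝ → ℂ} (hi : Integrable h) : Integrable (fun z => (κ x z : ℂ) * h z) :=
  hi.bdd_mul (c := B)
    (Complex.measurable_ofReal.comp (hκ.meas_left x)).aestronglyMeasurable
    (by
      filter_upwards with z
      rw [Complex.norm_real, Real.norm_of_nonneg (hκ.nonneg x z)]
      exact hB z)

lemma rerr_eq (hK : GoodKernel A K) {u : ℤ → ℝ → ℂ} (hm : ∀ i, Measurable (u i))
    (hi : ∀ i, Integrable (u i)) (s e n : ℤ) (hn : n ≤ e) (x : ℝ) :
    rerr K u (Finset.Ioc s e) n x = csum K u (Finset.Ioc s n) x -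
      avgOp (dk n) (csum K u (Finset.Ioc s e)) x := by
  unfold rerr qerr
  rw [Finset.sum_sub_distrib]
  congr 1
  · rw [← Finset.sum_filter]
    unfold csum
    congr 1
    ext i
    simp only [Finset.mem_filter, Finset.mem_Ioc]
    omega
  · unfold avgOp csum
    simp only [Finset.mul_sum]
    rw [integral_finsetSum]
    intro i _
    exact (avgKer_dk n).integrable_mul (dk_le n x) (conv_integrable hK i (hm i) (hi i))

lemma three_sq (a b c : ℂ) : ‖a - b + c‖ₑ ^ 2 ≤ 3 * (‖a‖ₑ ^ 2 + ‖b‖ₑ ^ 2 + ‖c‖ₑ ^ 2) := by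
  have h : ‖a - b + c‖ ^ 2 ≤ 3 * (‖a‖ ^ 2 + ‖b‖ ^ 2 + ‖c‖ ^ 2) := by
    have h1 : ‖a - b + c‖ ≤ ‖a‖ + ‖b‖ + ‖c‖ :=
      (norm_add_le _ _).trans (by gcongr; exact norm_sub_le _ _)
    have h2 := norm_nonneg (a - b + c)
    nlinarith [sq_nonneg (‖a‖ - ‖b‖), sq_nonneg (‖a‖ - ‖c‖), sq_nonneg (‖b‖ - ‖c‖)]
  simp only [enorm_sq]
  rw [← ENNReal.ofReal_add (by positivity) (by positivity),
    ← ENNReal.ofReal_add (by positivity) (by positivity),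
    show (3:ℝ≥0∞) = ENNReal.ofReal 3 by simp, ← ENNReal.ofReal_mul (by norm_num)]
  exact ENNReal.ofReal_le_ofReal h

lemma lint3 {f g : ℝ → ℝ≥0∞} (h : ℝ → ℝ≥0∞) (hf : Measurable f) (hg : Measurable g) {c : ℝ≥0∞}
    (hc : c ≠ ⊤) : ∫⁻ x, (c * f x + c * g x + c * h x) =
      c * (∫⁻ x, f x) + c * (∫⁻ x, g x) + c * ∫⁻ x, h x := by
  simp only [← mul_add]
  rw [lintegral_const_mul' _ _ hc]
  congr 1
  have hfg : Measurable fun x => f x + g x := hf.add hg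
  rw [lintegral_add_left hfg, lintegral_add_left hf]

/-- constant for the martingale differences -/
def cD (A : ℝ) : ℝ≥0∞ :=
  3 * (cR A + cR A + ENNReal.ofReal (A * Real.pi) * ENNReal.ofReal (A * Real.pi))

lemma delta_L2 (hK : GoodKernel A K) {u : ℤ → ℝ → ℂ} (hm : ∀ i, Measurable (u i))
    (hi : ∀ i, Integrable (u i)) (s : ℤ) (T : ℕ) :
    ∑ t ∈ Finset.range T, ∫⁻ x, ‖avgOp (dk (s + t + 1)) (csum K u (Finset.Ioc s (s + T))) x -
      avgOp (dk (s + t)) (csum K u (Finset.Ioc s (s + T))) x‖ₑ ^ 2 ≤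
      cD A * ∑ i ∈ Finset.Ioc s (s + T), ∫⁻ y, ‖u i y‖ₑ ^ 2 := by
  set I := Finset.Ioc s (s + (T:ℤ)) with hI
  have step : ∀ t ∈ Finset.range T, ∫⁻ x, ‖avgOp (dk (s + t + 1)) (csum K u I) x -
      avgOp (dk (s + t)) (csum K u I) x‖ₑ ^ 2 ≤
      3 * (∫⁻ x, ‖rerr K u I (s + t) x‖ₑ ^ 2) + 3 * (∫⁻ x, ‖rerr K u I (s + t + 1) x‖ₑ ^ 2) +
      3 * (ENNReal.ofReal (A * Real.pi) * ENNReal.ofReal (A * Real.pi) *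
        ∫⁻ y, ‖u (s + t + 1) y‖ₑ ^ 2) := by
    intro t ht
    rw [Finset.mem_range] at ht
    have m1 := (rerr_measurable hK I (s + t) hm).enorm.pow_const 2
    have m2 := (rerr_measurable hK I (s + t + 1) hm).enorm.pow_const 2
    calc _ ≤ ∫⁻ x, (3 * ‖rerr K u I (s + t) x‖ₑ ^ 2 + 3 * ‖rerr K u I (s + t + 1) x‖ₑ ^ 2 +
          3 * ‖conv (K (s + t + 1)) (u (s + t + 1)) x‖ₑ ^ 2) := by
          refine lintegral_mono fun x => ?_
          rw [← mul_add, ← mul_add]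
          refine le_trans (le_of_eq ?_) (three_sq _ _ _)
          congr 2
          rw [hI, rerr_eq hK hm hi s _ (s + t) (by omega), rerr_eq hK hm hi s _ (s + t + 1) (by omega)]
          have : csum K u (Finset.Ioc s (s + t + 1)) x = csum K u (Finset.Ioc s (s + t)) x +
              conv (K (s + t + 1)) (u (s + t + 1)) x := by
            unfold csum
            rw [show Finset.Ioc s (s + (t:ℤ) + 1) = insert (s + (t:ℤ) + 1) (Finset.Ioc s (s + t)) by
              ext i; simp only [Finset.mem_insert, Finset.mem_Ioc]; omega]
            rw [Finset.sum_insert (by simp), add_comm]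
          rw [this]; ring
      _ = 3 * (∫⁻ x, ‖rerr K u I (s + t) x‖ₑ ^ 2) + 3 * (∫⁻ x, ‖rerr K u I (s + t + 1) x‖ₑ ^ 2) +
          3 * ∫⁻ x, ‖conv (K (s + t + 1)) (u (s + t + 1)) x‖ₑ ^ 2 := by
          exact lint3 _ m1 m2 (by simp)
      _ ≤ _ := by gcongr; exact conv_L2 hK _ (hm _)
  refine (Finset.sum_le_sum step).trans ?_
  rw [Finset.sum_add_distrib, Finset.sum_add_distrib, ← Finset.mul_sum, ← Finset.mul_sum,
    ← Finset.mul_sum, ← Finset.mul_sum]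
  have r1 := rerr_L2 hK I ((Finset.range T).map ⟨fun t : ℕ => s + (t:ℤ), fun a b h => by
    simpa using h⟩) hm hi
  have r2 := rerr_L2 hK I ((Finset.range T).map ⟨fun t : ℕ => s + (t:ℤ) + 1, fun a b h => by
    simpa using h⟩) hm hi
  rw [Finset.sum_map] at r1 r2
  have e3 : ∑ t ∈ Finset.range T, ∫⁻ y, ‖u (s + t + 1) y‖ₑ ^ 2 = ∑ i ∈ I, ∫⁻ y, ‖u i y‖ₑ ^ 2 := by
    have : I = (Finset.range T).map ⟨fun t : ℕ => s + (t:ℤ) + 1, fun a b h => by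
      simpa using h⟩ := by
      ext i
      simp only [hI, Finset.mem_Ioc, Finset.mem_map, Finset.mem_range]
      constructor
      · intro h; exact ⟨(i - s - 1).toNat, by omega, show s + ((i - s - 1).toNat : ℤ) + 1 = i by omega⟩
      · rintro ⟨t, ht, h⟩; change s + (t:ℤ) + 1 = i at h; omega
    rw [this, Finset.sum_map]; rfl
  rw [e3]
  change ∑ t ∈ Finset.range T, ∫⁻ x, ‖rerr K u I (s + t) x‖ₑ ^ 2 ≤ _ at r1
  change ∑ t ∈ Finset.range T, ∫⁻ x, ‖rerr K u I (s + t + 1) x‖ₑ ^ 2 ≤ _ at r2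
  unfold cD
  calc _ ≤ 3 * (cR A * ∑ i ∈ I, ∫⁻ y, ‖u i y‖ₑ ^ 2) + 3 * (cR A * ∑ i ∈ I, ∫⁻ y, ‖u i y‖ₑ ^ 2) +
      3 * (ENNReal.ofReal (A * Real.pi) * ENNReal.ofReal (A * Real.pi) *
        ∑ i ∈ I, ∫⁻ y, ‖u i y‖ₑ ^ 2) := by gcongr
    _ = _ := by ring

/-- constant for the jump lemma -/
def cJ (A : ℝ) : ℝ≥0∞ := 16 * (cR A + cR A + cD A)

lemma jump_L2 (hK : GoodKernel A K) {u : ℤ → ℝ → ℂ} (hm : ∀ i, Measurable (u i))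
    (hi : ∀ i, Integrable (u i)) (s : ℤ) (T : ℕ) {μ : ℝ} (hμ : 0 < μ) :
    ∃ B : ℝ → ℝ≥0∞, Measurable B ∧
      (∀ (x : ℝ) (k : ℕ) (n : ℕ → ℤ), Monotone n → s ≤ n 0 → n k ≤ s + T →
        ∑ l ∈ Finset.range k, (if μ < ‖csum K u (Finset.Ioc (n l) (n (l + 1))) x‖ then (1:ℝ≥0∞)
          else 0) ≤ B x) ∧
      ∫⁻ x, B x ≤ cJ A * ENNReal.ofReal ((μ ^ 2)⁻¹) *
        ∑ i ∈ Finset.Ioc s (s + T), ∫⁻ y, ‖u i y‖ₑ ^ 2 := by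
  set I := Finset.Ioc s (s + (T:ℤ)) with hI
  set e : ℕ → ℝ → ℂ := fun t => avgOp (dk (s + t)) (csum K u I) with he
  set R : ℤ → ℝ → ℂ := fun n => rerr K u I n with hR
  have hRm : ∀ n, Measurable (R n) := fun n => rerr_measurable hK I n hm
  have hFm := csum_measurable hK hm I
  have hFi := csum_integrable hK hm hi I
  have hem : ∀ t, Measurable (e t) := fun t => (avgKer_dk _).measurable_avgOp hFm
  set b : ℝ → ℤ → ℝ := fun x p => 16 / μ ^ 2 * (∑ m ∈ Finset.Ioc s p, ‖R m x‖ ^ 2) +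
    16 / μ ^ 2 * (∑ m ∈ Finset.Ico s p, ‖R m x‖ ^ 2) +
    ((greedy (μ / 4) (fun t => e t x) (p - s).toNat).2 : ℝ) with hb
  refine ⟨fun x => ENNReal.ofReal (b x (s + T)), ?_, ?_, ?_⟩
  · apply ENNReal.measurable_ofReal.comp
    simp only [hb]
    refine Measurable.add (Measurable.add ?_ ?_) ?_
    · exact (Finset.measurable_fun_sum _ fun m _ => (hRm m).norm.pow_const 2).const_mul _
    · exact (Finset.measurable_fun_sum _ fun m _ => (hRm m).norm.pow_const 2).const_mul _
    · exact measurable_from_nat.comp (greedy_measurable (μ / 4) hem _).snd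
  · intro x k n hn hn0 hnk
    have hbmono : ∀ p q : ℤ, p ≤ q → b x p ≤ b x q := by
      intro p q hpq
      simp only [hb]
      gcongr
      exact greedy_mono _ _ (by omega)
    have hb0 : ∀ p, 0 ≤ b x p := fun p => by simp only [hb]; positivity
    have key : ∀ p q : ℤ, s ≤ p → p ≤ q → q ≤ s + T →
        (if μ < ‖csum K u (Finset.Ioc p q) x‖ then (1:ℝ) else 0) ≤ b x q - b x p := by
      intro p q hp hpq hq
      split_ifs with h
      swap
      · have := hbmono p q hpq; linarith
      have hlt : p < q := by
        rcases hpq.lt_or_eq with h' | h'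
        · exact h'
        · subst h'; simp [csum] at h; linarith
      have hdec : csum K u (Finset.Ioc p q) x = R q x - R p x +
          (e (q - s).toNat x - e (p - s).toNat x) := by
        have h1 : csum K u (Finset.Ioc s q) x = csum K u (Finset.Ioc s p) x +
            csum K u (Finset.Ioc p q) x := by
          unfold csum
          rw [← Finset.sum_union]
          · congr 1; ext i; simp only [Finset.mem_union, Finset.mem_Ioc]; omega
          · rw [Finset.disjoint_left]; intro i; simp only [Finset.mem_Ioc]; omega
        simp only [hR, he, hI]
        rw [rerr_eq hK hm hi s _ q hq, rerr_eq hK hm hi s _ p (by omega), h1]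
        rw [show s + ((q - s).toNat : ℤ) = q by omega, show s + ((p - s).toNat : ℤ) = p by omega]
        ring
      have hnorm : ‖csum K u (Finset.Ioc p q) x‖ ≤ ‖R q x‖ + ‖R p x‖ +
          ‖e (q - s).toNat x - e (p - s).toNat x‖ := by
        rw [hdec]
        exact (norm_add_le _ _).trans (by gcongr; exact norm_sub_le _ _)
      have m1 : ∑ m ∈ Finset.Ioc s p, ‖R m x‖ ^ 2 ≤ ∑ m ∈ Finset.Ioc s q, ‖R m x‖ ^ 2 :=
        Finset.sum_le_sum_of_subset_of_nonneg (Finset.Ioc_subset_Ioc_right hpq)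
          fun _ _ _ => by positivity
      have m2 : ∑ m ∈ Finset.Ico s p, ‖R m x‖ ^ 2 ≤ ∑ m ∈ Finset.Ico s q, ‖R m x‖ ^ 2 :=
        Finset.sum_le_sum_of_subset_of_nonneg (Finset.Ico_subset_Ico_right hpq)
          fun _ _ _ => by positivity
      have m3 : (greedy (μ / 4) (fun t => e t x) (p - s).toNat).2 ≤
          (greedy (μ / 4) (fun t => e t x) (q - s).toNat).2 := greedy_mono _ _ (by omega)
      have m3' : ((greedy (μ / 4) (fun t => e t x) (p - s).toNat).2 : ℝ) ≤
          (greedy (μ / 4) (fun t => e t x) (q - s).toNat).2 := by exact_mod_cast m3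
      have hc : 0 < 16 / μ ^ 2 := by positivity
      have m1' := mul_le_mul_of_nonneg_left m1 hc.le
      have m2' := mul_le_mul_of_nonneg_left m2 hc.le
      have big : ∀ a : ℝ, μ / 4 < a → 1 ≤ 16 / μ ^ 2 * a ^ 2 := by
        intro a ha
        rw [div_mul_eq_mul_div, le_div_iff₀ (by positivity)]
        nlinarith
      simp only [hb]
      rcases lt_or_ge (μ / 4) ‖R q x‖ with h1 | h1
      · have : ∑ m ∈ Finset.Ioc s p, ‖R m x‖ ^ 2 + ‖R q x‖ ^ 2 ≤
            ∑ m ∈ Finset.Ioc s q, ‖R m x‖ ^ 2 := by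
          rw [add_comm, ← Finset.sum_insert (f := fun m => ‖R m x‖ ^ 2) (by simp; omega)]
          refine Finset.sum_le_sum_of_subset_of_nonneg ?_ fun _ _ _ => by positivity
          intro i; simp only [Finset.mem_insert, Finset.mem_Ioc]; omega
        have := mul_le_mul_of_nonneg_left this hc.le
        have := big _ h1
        linarith
      rcases lt_or_ge (μ / 4) ‖R p x‖ with h2 | h2
      · have : ∑ m ∈ Finset.Ico s p, ‖R m x‖ ^ 2 + ‖R p x‖ ^ 2 ≤
            ∑ m ∈ Finset.Ico s q, ‖R m x‖ ^ 2 := by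
          rw [add_comm, ← Finset.sum_insert (f := fun m => ‖R m x‖ ^ 2) (by simp)]
          refine Finset.sum_le_sum_of_subset_of_nonneg ?_ fun _ _ _ => by positivity
          intro i; simp only [Finset.mem_insert, Finset.mem_Ico]; omega
        have := mul_le_mul_of_nonneg_left this hc.le
        have := big _ h2
        linarith
      · have h3 := greedy_jump (c := μ / 4) (by positivity) (fun t => e t x)
          (p := (p - s).toNat) (q := (q - s).toNat) (by omega) (by linarith)
        have h3' : ((greedy (μ / 4) (fun t => e t x) (p - s).toNat).2 : ℝ) + 1 ≤
          (greedy (μ / 4) (fun t => e t x) (q - s).toNat).2 := by exact_mod_cast h3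
        linarith
    have hsum : ∑ l ∈ Finset.range k, (if μ < ‖csum K u (Finset.Ioc (n l) (n (l + 1))) x‖
        then (1:ℝ) else 0) ≤ b x (s + T) := by
      calc _ ≤ ∑ l ∈ Finset.range k, (b x (n (l + 1)) - b x (n l)) := by
            refine Finset.sum_le_sum fun l hl => ?_
            rw [Finset.mem_range] at hl
            exact key _ _ (hn0.trans (hn (Nat.zero_le _))) (hn (Nat.le_succ _))
              ((hn (by omega)).trans hnk)
        _ = b x (n k) - b x (n 0) := Finset.sum_range_sub (fun l => b x (n l)) k
        _ ≤ _ := by have := hb0 (n 0); have := hbmono _ _ hnk; linarith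
    refine le_trans (le_of_eq ?_) (ENNReal.ofReal_le_ofReal hsum)
    rw [ENNReal.ofReal_sum_of_nonneg (fun l _ => by split_ifs <;> norm_num)]
    refine Finset.sum_congr rfl fun l _ => ?_
    split_ifs <;> simp
  · have hc : 0 ≤ 16 / μ ^ 2 := by positivity
    have hpt : ∀ x, ENNReal.ofReal (b x (s + T)) =
        ENNReal.ofReal (16 / μ ^ 2) * (∑ m ∈ Finset.Ioc s (s + T), ‖R m x‖ₑ ^ 2) +
        ENNReal.ofReal (16 / μ ^ 2) * (∑ m ∈ Finset.Ico s (s + T), ‖R m x‖ₑ ^ 2) +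
        ENNReal.ofReal (16 / μ ^ 2) * ENNReal.ofReal ((μ / 4) ^ 2 *
          ((greedy (μ / 4) (fun t => e t x) T).2 : ℝ)) := by
      intro x
      simp only [hb]
      have e1 : ∀ c : ℝ, ENNReal.ofReal (16 / μ ^ 2) * ENNReal.ofReal ((μ / 4) ^ 2 * c) =
          ENNReal.ofReal c := by
        intro c
        rw [← ENNReal.ofReal_mul hc, ← mul_assoc,
          show 16 / μ ^ 2 * (μ / 4) ^ 2 = 1 by field_simp; norm_num, one_mul]
      rw [e1, ENNReal.ofReal_add (by positivity) (by positivity),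
        ENNReal.ofReal_add (by positivity) (by positivity), ENNReal.ofReal_mul hc,
        ENNReal.ofReal_mul hc,
        ENNReal.ofReal_sum_of_nonneg (fun _ _ => by positivity),
        ENNReal.ofReal_sum_of_nonneg (fun _ _ => by positivity),
        show (s + (T:ℤ) - s).toNat = T by omega]
      simp only [enorm_sq]
    simp only [hpt]
    have mm : ∀ J : Finset ℤ, Measurable fun x => ∑ m ∈ J, ‖R m x‖ₑ ^ 2 := fun J =>
      Finset.measurable_fun_sum _ fun m _ => (hRm m).enorm.pow_const 2
    rw [lint3 _ (mm _) (mm _) ENNReal.ofReal_ne_top,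
      lintegral_finsetSum _ (fun m _ => (hRm m).enorm.pow_const 2),
      lintegral_finsetSum _ (fun m _ => (hRm m).enorm.pow_const 2)]
    have r1 := rerr_L2 hK I (Finset.Ioc s (s + T)) hm hi
    have r2 := rerr_L2 hK I (Finset.Ico s (s + T)) hm hi
    have r3 := (martingale_count hFm hFi s (c := μ / 4) (by positivity) T).trans
      (delta_L2 hK hm hi s T)
    calc _ ≤ ENNReal.ofReal (16 / μ ^ 2) * (cR A * ∑ i ∈ I, ∫⁻ y, ‖u i y‖ₑ ^ 2) +
          ENNReal.ofReal (16 / μ ^ 2) * (cR A * ∑ i ∈ I, ∫⁻ y, ‖u i y‖ₑ ^ 2) +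
          ENNReal.ofReal (16 / μ ^ 2) * (cD A * ∑ i ∈ I, ∫⁻ y, ‖u i y‖ₑ ^ 2) := by
          gcongr
      _ = _ := by
          rw [div_eq_mul_inv, ENNReal.ofReal_mul (by norm_num)]
          unfold cJ
          rw [show ENNReal.ofReal 16 = 16 by simp]
          ring

end

lemma sum_Ioc_consec {M : Type*} [AddCommMonoid M] (a : ℤ → M) (n : ℕ → ℤ) (hn : Monotone n)
    (k : ℕ) : ∑ l ∈ Finset.range k, ∑ i ∈ Finset.Ioc (n l) (n (l + 1)), a i =
      ∑ i ∈ Finset.Ioc (n 0) (n k), a i := by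
  induction k with
  | zero => simp
  | succ k ih =>
    rw [Finset.sum_range_succ, ih, ← Finset.sum_union]
    · congr 1
      ext i
      have h1 := hn (Nat.zero_le k)
      have h2 := hn (Nat.le_succ k)
      simp only [Nat.succ_eq_add_one] at h2
      simp only [Finset.mem_union, Finset.mem_Ioc]; omega
    · rw [Finset.disjoint_left]; intro i; simp only [Finset.mem_Ioc]; omega

/-- level function -/
def lev (μ : ℝ) (z : ℂ) : ℝ≥0∞ :=
  ENNReal.ofReal (if ‖z‖ ≤ μ then (‖z‖ / μ) ^ 2 else ‖z‖ / μ)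

lemma lev_measurable (μ : ℝ) : Measurable (lev μ) := by
  unfold lev
  apply ENNReal.measurable_ofReal.comp
  refine Measurable.ite (measurableSet_le measurable_norm measurable_const) ?_ ?_
  · exact (measurable_norm.div_const μ).pow_const 2
  · exact measurable_norm.div_const μ

/-- constant of the level lemma -/
def cL (A : ℝ) : ℝ≥0∞ := 4 * cJ A + 2 * ENNReal.ofReal (A * Real.pi)

section
variable {A : ℝ} {K : ℤ → ℝ → ℂ}

lemma csum_add (hK : GoodKernel A K) {u v : ℤ → ℝ → ℂ} 
    (hu : ∀ i, Integrable (u i)) (hv : ∀ i, Integrable (v i)) (I : Finset ℤ) (x : ℝ) :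
    csum K (fun i y => u i y + v i y) I x = csum K u I x + csum K v I x := by
  unfold csum
  rw [← Finset.sum_add_distrib]
  refine Finset.sum_congr rfl fun i _ => ?_
  unfold conv
  rw [← integral_add (conv_integrand hK i (hu i) x) (conv_integrand hK i (hv i) x)]
  congr 1; ext y; ring

lemma csum_enorm_le (u : ℤ → ℝ → ℂ) (I : Finset ℤ) (x : ℝ) :
    ‖csum K u I x‖ₑ ≤ ∑ i ∈ I, ‖conv (K i) (u i) x‖ₑ := enorm_sum_le _ _

lemma csum_blocks (u : ℤ → ℝ → ℂ) (n : ℕ → ℤ) (hn : Monotone n) (k : ℕ) {s e : ℤ} (h0 : s ≤ n 0)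
    (h1 : n k ≤ e) (x : ℝ) :
    ∑ l ∈ Finset.range k, ‖csum K u (Finset.Ioc (n l) (n (l + 1))) x‖ₑ ≤
      ∑ i ∈ Finset.Ioc s e, ‖conv (K i) (u i) x‖ₑ := by
  refine (Finset.sum_le_sum fun l _ => csum_enorm_le u _ x).trans ?_
  rw [sum_Ioc_consec (fun i => ‖conv (K i) (u i) x‖ₑ) n hn k]
  exact Finset.sum_le_sum_of_subset (Finset.Ioc_subset_Ioc h0 h1)

lemma jump_level (hK : GoodKernel A K) {f : ℤ → ℝ → ℂ} (hm : ∀ i, Measurable (f i))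
    (hi : ∀ i, Integrable (f i)) (s : ℤ) (T : ℕ) {μ : ℝ} (hμ : 0 < μ) :
    ∃ B : ℝ → ℝ≥0∞, Measurable B ∧
      (∀ (x : ℝ) (k : ℕ) (n : ℕ → ℤ), Monotone n → s ≤ n 0 → n k ≤ s + T →
        ∑ l ∈ Finset.range k, (if μ < ‖csum K f (Finset.Ioc (n l) (n (l + 1))) x‖ then (1:ℝ≥0∞)
          else 0) ≤ B x) ∧
      ∫⁻ x, B x ≤ cL A * ∑ i ∈ Finset.Ioc s (s + T), ∫⁻ y, lev μ (f i y) := by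
  set u : ℤ → ℝ → ℂ := fun i y => if ‖f i y‖ ≤ μ then f i y else 0 with hu
  set v : ℤ → ℝ → ℂ := fun i y => if ‖f i y‖ ≤ μ then 0 else f i y with hv
  have hset : ∀ i, MeasurableSet {y | ‖f i y‖ ≤ μ} := fun i =>
    measurableSet_le (hm i).norm measurable_const
  have hum : ∀ i, Measurable (u i) := fun i => Measurable.ite (hset i) (hm i) measurable_const
  have hvm : ∀ i, Measurable (v i) := fun i => Measurable.ite (hset i) measurable_const (hm i)
  have hui : ∀ i, Integrable (u i) := fun i => (hi i).mono (hum i).aestronglyMeasurable (by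
    filter_upwards with y
    simp only [hu]; split_ifs <;> simp)
  have hvi : ∀ i, Integrable (v i) := fun i => (hi i).mono (hvm i).aestronglyMeasurable (by
    filter_upwards with y
    simp only [hv]; split_ifs <;> simp)
  have hfuv : f = fun i y => u i y + v i y := by
    ext i y; simp only [hu, hv]; split_ifs <;> simp
  obtain ⟨B, hBm, hB, hBi⟩ := jump_L2 hK hum hui s T (half_pos hμ)
  have hcm : ∀ i, Measurable (fun x => ‖conv (K i) (v i) x‖ₑ) := fun i =>
    (conv_measurable hK i (hvm i)).enorm
  refine ⟨fun x => B x + ENNReal.ofReal (2 / μ) *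
    ∑ i ∈ Finset.Ioc s (s + T), ‖conv (K i) (v i) x‖ₑ, ?_, ?_, ?_⟩
  · exact hBm.add ((Finset.measurable_fun_sum _ fun i _ => hcm i).const_mul _)
  · intro x k n hn h0 hk
    have key : ∀ J : Finset ℤ, (if μ < ‖csum K f J x‖ then (1:ℝ≥0∞) else 0) ≤
        (if μ / 2 < ‖csum K u J x‖ then (1:ℝ≥0∞) else 0) +
          ENNReal.ofReal (2 / μ) * ‖csum K v J x‖ₑ := by
      intro J
      have e : csum K f J x = csum K u J x + csum K v J x := by
        conv_lhs => rw [hfuv]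
        exact csum_add hK hui hvi J x
      split_ifs with h1 h2
      · exact le_self_add
      · rw [zero_add, ← ofReal_norm, ← ENNReal.ofReal_mul (by positivity)]
        rw [← ENNReal.ofReal_one]
        apply ENNReal.ofReal_le_ofReal
        rw [e] at h1
        have := norm_add_le (csum K u J x) (csum K v J x)
        rw [div_mul_eq_mul_div, le_div_iff₀ hμ]
        linarith
      · exact zero_le
      · exact zero_le
    refine (Finset.sum_le_sum fun l _ => key _).trans ?_
    rw [Finset.sum_add_distrib, ← Finset.mul_sum]
    refine add_le_add (hB x k n hn h0 hk) ?_
    gcongr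
    exact csum_blocks v n hn k h0 hk x
  · rw [lintegral_add_left hBm, lintegral_const_mul' _ _ ENNReal.ofReal_ne_top,
      lintegral_finsetSum _ (fun i _ => hcm i)]
    have hlev : ∀ i y, lev μ (f i y) = ENNReal.ofReal ((μ ^ 2)⁻¹) * ‖u i y‖ₑ ^ 2 +
        ENNReal.ofReal (μ⁻¹) * ‖v i y‖ₑ := by
      intro i y
      simp only [lev, hu, hv]
      split_ifs
      · simp only [enorm_sq, enorm_zero, mul_zero, add_zero]
        rw [← ENNReal.ofReal_mul (by positivity)]
        congr 1; rw [div_pow, div_eq_inv_mul]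
      · rw [← ofReal_norm (f i y), ← ENNReal.ofReal_mul (by positivity), div_eq_inv_mul]; simp
    have hInt0 : ∀ i, ∫⁻ y, lev μ (f i y) = ENNReal.ofReal ((μ ^ 2)⁻¹) * (∫⁻ y, ‖u i y‖ₑ ^ 2) +
        ENNReal.ofReal (μ⁻¹) * ∫⁻ y, ‖v i y‖ₑ := by
      intro i
      simp only [hlev]
      rw [lintegral_add_left (((hum i).enorm.pow_const 2).const_mul _),
        lintegral_const_mul' _ _ ENNReal.ofReal_ne_top,
        lintegral_const_mul' _ _ ENNReal.ofReal_ne_top]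
    simp only [hInt0]
    rw [Finset.sum_add_distrib, ← Finset.mul_sum, ← Finset.mul_sum]
    have e1 : ENNReal.ofReal (((μ / 2) ^ 2)⁻¹) = 4 * ENNReal.ofReal ((μ ^ 2)⁻¹) := by
      rw [show (4:ℝ≥0∞) = ENNReal.ofReal 4 by simp, ← ENNReal.ofReal_mul (by norm_num)]
      congr 1; field_simp; norm_num
    have e2 : ENNReal.ofReal (2 / μ) = 2 * ENNReal.ofReal (μ⁻¹) := by
      rw [show (2:ℝ≥0∞) = ENNReal.ofReal 2 by simp, ← ENNReal.ofReal_mul (by norm_num)]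
      rfl
    rw [e1] at hBi
    rw [e2]
    have h2 : ∑ i ∈ Finset.Ioc s (s + (T:ℤ)), ∫⁻ x, ‖conv (K i) (v i) x‖ₑ ≤
        ENNReal.ofReal (A * Real.pi) * ∑ i ∈ Finset.Ioc s (s + (T:ℤ)), ∫⁻ x, ‖v i x‖ₑ := by
      rw [Finset.mul_sum]
      exact Finset.sum_le_sum fun i _ => conv_L1 hK i (hvm i)
    set U := ∑ i ∈ Finset.Ioc s (s + (T:ℤ)), ∫⁻ x, ‖u i x‖ₑ ^ 2
    set V := ∑ i ∈ Finset.Ioc s (s + (T:ℤ)), ∫⁻ x, ‖v i x‖ₑ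
    calc _ ≤ cJ A * (4 * ENNReal.ofReal ((μ ^ 2)⁻¹)) * U +
          2 * ENNReal.ofReal (μ⁻¹) * (ENNReal.ofReal (A * Real.pi) * V) := by gcongr
      _ = 4 * cJ A * (ENNReal.ofReal ((μ ^ 2)⁻¹) * U) +
          2 * ENNReal.ofReal (A * Real.pi) * (ENNReal.ofReal (μ⁻¹) * V) := by ring
      _ ≤ _ := by
          unfold cL
          rw [mul_add]
          gcongr
          · exact le_self_add
          · exact le_add_self

lemma pow_layer {r : ℝ} (hr : 0 < r) (z : ℂ) :
    ‖z‖ₑ ^ r ≤ ∑' j : ℤ, ENNReal.ofReal ((2 * (2:ℝ) ^ j) ^ r) *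
      (if (2:ℝ) ^ j < ‖z‖ then (1:ℝ≥0∞) else 0) := by
  by_cases hz : z = 0
  · subst hz; simp [hr]
  obtain ⟨m, h1, h2⟩ := exists_mem_Ioc_zpow (norm_pos_iff.2 hz) (one_lt_two)
  refine le_trans ?_ (ENNReal.le_tsum m)
  rw [if_pos h1, mul_one, ← ofReal_norm, ENNReal.ofReal_rpow_of_nonneg (norm_nonneg _) hr.le]
  apply ENNReal.ofReal_le_ofReal
  apply Real.rpow_le_rpow (norm_nonneg _) _ hr.le
  rwa [zpow_add_one₀ (by norm_num), mul_comm] at h2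

/-- base of the geometric series -/
def bS (r : ℝ) : ℝ := max ((1/2:ℝ) ^ (2 - r)) ((1/2:ℝ) ^ (r - 1))

/-- constant of the layer sum -/
def cS (r : ℝ) : ℝ≥0∞ := ENNReal.ofReal (2 ^ r * 2 ^ (2 - r)) * gsum (bS r)

lemma lev_layer {r : ℝ} (hr1 : 1 < r) (hr2 : r < 2) (z : ℂ) :
    ∑' j : ℤ, ENNReal.ofReal ((2 * (2:ℝ) ^ j) ^ r) * lev (2 ^ j) z ≤ cS r * ‖z‖ₑ ^ r := by
  by_cases hz : z = 0
  · subst hz; simp [lev]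
  have ha : 0 < ‖z‖ := norm_pos_iff.2 hz
  obtain ⟨m, h1, h2⟩ := exists_mem_Ioc_zpow ha (one_lt_two)
  set a := ‖z‖ with hadef
  have key : ∀ j : ℤ, ENNReal.ofReal ((2 * (2:ℝ) ^ j) ^ r) * lev (2 ^ j) z ≤
      (ENNReal.ofReal (2 ^ r * 2 ^ (2 - r)) * ENNReal.ofReal (a ^ r)) *
        ENNReal.ofReal (bS r ^ (j - m).natAbs) := by
    intro j
    unfold lev
    have hw : (0:ℝ) < 2 ^ j := by positivity
    rw [← ENNReal.ofReal_mul (by positivity), ← ENNReal.ofReal_mul (by positivity),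
      ← ENNReal.ofReal_mul (by positivity)]
    apply ENNReal.ofReal_le_ofReal
    rw [← hadef]
    have hrp : ∀ (p : ℝ) (N : ℕ), ((1/2:ℝ) ^ N) ^ p = ((1/2:ℝ) ^ p) ^ N := by
      intro p N
      rw [← Real.rpow_natCast, ← Real.rpow_mul (by norm_num), mul_comm, Real.rpow_mul (by norm_num),
        Real.rpow_natCast]
    split_ifs with h
    · have hmj : m < j := by
        have : (2:ℝ) ^ m < 2 ^ j := h1.trans_le h
        exact (zpow_lt_zpow_iff_right₀ (by norm_num)).1 this
      have e1 : (2 * (2:ℝ) ^ j) ^ r * (a / 2 ^ j) ^ 2 = 2 ^ r * a ^ r * (a / 2 ^ j) ^ (2 - r) := by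
        rw [Real.mul_rpow (by norm_num) hw.le, Real.rpow_sub (div_pos ha hw), Real.rpow_two,
          Real.div_rpow ha.le hw.le]
        have := (Real.rpow_pos_of_pos ha r).ne'
        have := (Real.rpow_pos_of_pos hw r).ne'
        field_simp
      have e2 : a / 2 ^ j ≤ 2 * (1/2:ℝ) ^ (j - m).natAbs := by
        rw [div_le_iff₀ hw]
        refine h2.trans (le_of_eq ?_)
        have : j = m + ((j - m).natAbs : ℤ) := by omega
        generalize (j - m).natAbs = N at this
        subst this
        rw [zpow_add₀ (by norm_num), zpow_add₀ (by norm_num), zpow_natCast, zpow_one, mul_assoc,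
          mul_left_comm ((1/2:ℝ) ^ N), ← mul_pow]
        norm_num; ring
      rw [e1]
      calc _ ≤ 2 ^ r * a ^ r * (2 * (1/2:ℝ) ^ (j - m).natAbs) ^ (2 - r) := by
            gcongr
        _ = 2 ^ r * 2 ^ (2 - r) * a ^ r * ((1/2:ℝ) ^ (2 - r)) ^ (j - m).natAbs := by
            rw [Real.mul_rpow (by norm_num) (by positivity), hrp]; ring
        _ ≤ _ := by
            gcongr
            exact le_max_left _ _
    · rw [not_le] at h
      have hmj : j ≤ m := by
        have : (2:ℝ) ^ j < 2 ^ (m + 1) := h.trans_le h2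
        have := (zpow_lt_zpow_iff_right₀ (by norm_num)).1 this
        omega
      have e1 : (2 * (2:ℝ) ^ j) ^ r * (a / 2 ^ j) = 2 ^ r * a ^ r * (2 ^ j / a) ^ (r - 1) := by
        rw [Real.mul_rpow (by norm_num) hw.le, Real.rpow_sub (by positivity),
          Real.div_rpow hw.le ha.le, Real.rpow_one]
        have := (Real.rpow_pos_of_pos ha r).ne'
        have := (Real.rpow_pos_of_pos hw r).ne'
        field_simp
      have e2 : 2 ^ j / a ≤ (1/2:ℝ) ^ (j - m).natAbs := by
        rw [div_le_iff₀ ha]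
        refine le_trans (le_of_eq ?_) (mul_le_mul_of_nonneg_left h1.le (by positivity))
        have : m = j + ((j - m).natAbs : ℤ) := by omega
        generalize (j - m).natAbs = N at this
        subst this
        rw [zpow_add₀ (by norm_num), zpow_natCast, mul_left_comm, ← mul_pow]; norm_num
      rw [e1]
      have h22 : (1:ℝ) ≤ 2 ^ (2 - r) := Real.one_le_rpow (by norm_num) (by linarith)
      calc _ ≤ 2 ^ r * a ^ r * ((1/2:ℝ) ^ (j - m).natAbs) ^ (r - 1) := by
            gcongr
        _ = 2 ^ r * 1 * a ^ r * ((1/2:ℝ) ^ (r - 1)) ^ (j - m).natAbs := by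
            rw [hrp]; ring
        _ ≤ _ := by
            gcongr
            exact le_max_right _ _
  refine (ENNReal.tsum_le_tsum key).trans ?_
  rw [ENNReal.tsum_mul_left, gsum_shift, ← ofReal_norm, ENNReal.ofReal_rpow_of_nonneg ha.le (by linarith)]
  unfold cS
  exact (by ring : _ = _).le

lemma cR_lt_top (A : ℝ) : cR A < ⊤ := by
  unfold cR
  exact ENNReal.mul_lt_top (ENNReal.mul_lt_top (gsum_lt_top (by norm_num) (by norm_num))
    ENNReal.ofReal_lt_top) (gsum_lt_top (by norm_num) (by norm_num))

lemma cL_lt_top (A : ℝ) : cL A < ⊤ := by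
  have h := cR_lt_top A
  unfold cL cJ cD
  finiteness

lemma cS_lt_top {r : ℝ} (hr1 : 1 < r) (hr2 : r < 2) : cS r < ⊤ := by
  unfold cS
  refine ENNReal.mul_lt_top ENNReal.ofReal_lt_top (gsum_lt_top ?_ ?_)
  · unfold bS; exact le_max_of_le_left (by positivity)
  · unfold bS
    exact max_lt (Real.rpow_lt_one (by norm_num) (by norm_num) (by linarith))
      (Real.rpow_lt_one (by norm_num) (by norm_num) (by linarith))

/-- strong type bound -/
lemma strong_rr (hK : GoodKernel A K) {r : ℝ} (hr1 : 1 ≤ r) (hr2 : r < 2) :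
    ∃ C : ℝ≥0∞, C < ⊤ ∧ ∀ (f : ℤ → ℝ → ℂ), (∀ i, Measurable (f i)) → (∀ i, Integrable (f i)) →
      ∀ (s : ℤ) (T : ℕ), ∃ G : ℝ → ℝ≥0∞, Measurable G ∧
      (∀ (x : ℝ) (k : ℕ) (n : ℕ → ℤ), Monotone n → s ≤ n 0 → n k ≤ s + T →
        ∑ l ∈ Finset.range k, ‖csum K f (Finset.Ioc (n l) (n (l + 1))) x‖ₑ ^ r ≤ G x) ∧
      ∫⁻ x, G x ≤ C * ∑ i ∈ Finset.Ioc s (s + T), ∫⁻ y, ‖f i y‖ₑ ^ r := by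
  rcases hr1.eq_or_lt with h | hr
  · subst h
    refine ⟨ENNReal.ofReal (A * Real.pi), ENNReal.ofReal_lt_top, fun f hm hi s T => ?_⟩
    refine ⟨fun x => ∑ i ∈ Finset.Ioc s (s + (T:ℤ)), ‖conv (K i) (f i) x‖ₑ, ?_, ?_, ?_⟩
    · exact Finset.measurable_fun_sum _ fun i _ => (conv_measurable hK i (hm i)).enorm
    · intro x k n hn h0 hk
      simp only [ENNReal.rpow_one]
      exact csum_blocks f n hn k h0 hk x
    · simp only [ENNReal.rpow_one]
      rw [lintegral_finsetSum _ (fun i _ => (conv_measurable hK i (hm i)).enorm), Finset.mul_sum]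
      exact Finset.sum_le_sum fun i _ => conv_L1 hK i (hm i)
  · refine ⟨cL A * cS r, ENNReal.mul_lt_top (cL_lt_top A) (cS_lt_top hr hr2), fun f hm hi s T => ?_⟩
    choose B hBm hB hBi using fun j : ℤ => jump_level hK hm hi s T (μ := 2 ^ j) (by positivity)
    refine ⟨fun x => ∑' j : ℤ, ENNReal.ofReal ((2 * (2:ℝ) ^ j) ^ r) * B j x, ?_, ?_, ?_⟩
    · exact Measurable.tsum fun j => (hBm j).const_mul _
    · intro x k n hn h0 hk
      refine (Finset.sum_le_sum fun l _ => pow_layer (by linarith) _).trans ?_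
      rw [← Summable.tsum_finsetSum (fun _ _ => ENNReal.summable)]
      refine ENNReal.tsum_le_tsum fun j => ?_
      rw [← Finset.mul_sum]
      gcongr
      exact hB j x k n hn h0 hk
    · rw [lintegral_tsum (fun j => ((hBm j).const_mul _).aemeasurable)]
      have hlm : ∀ (j : ℤ) (i : ℤ), Measurable fun y => lev ((2:ℝ) ^ j) (f i y) := fun j i =>
        (lev_measurable _).comp (hm i)
      calc _ ≤ ∑' j : ℤ, cL A * ∑ i ∈ Finset.Ioc s (s + (T:ℤ)),
            ∫⁻ y, ENNReal.ofReal ((2 * (2:ℝ) ^ j) ^ r) * lev (2 ^ j) (f i y) := by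
            refine ENNReal.tsum_le_tsum fun j => ?_
            rw [lintegral_const_mul _ (hBm j)]
            simp only [lintegral_const_mul' _ _ ENNReal.ofReal_ne_top]
            rw [← Finset.mul_sum, mul_left_comm]
            gcongr
            exact hBi j
        _ = cL A * ∑ i ∈ Finset.Ioc s (s + (T:ℤ)),
            ∫⁻ y, ∑' j : ℤ, ENNReal.ofReal ((2 * (2:ℝ) ^ j) ^ r) * lev (2 ^ j) (f i y) := by
            rw [ENNReal.tsum_mul_left, Summable.tsum_finsetSum (fun _ _ => ENNReal.summable)]
            congr 1
            refine Finset.sum_congr rfl fun i _ => ?_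
            rw [lintegral_tsum (fun j => ((hlm j i).const_mul _).aemeasurable)]
        _ ≤ cL A * ∑ i ∈ Finset.Ioc s (s + (T:ℤ)), ∫⁻ y, cS r * ‖f i y‖ₑ ^ r := by
            gcongr with i _ y
            exact lev_layer hr hr2 _
        _ = _ := by
            simp only [lintegral_const_mul' _ _ (cS_lt_top hr hr2).ne]
            rw [← Finset.mul_sum, mul_assoc]

end

/-- dyadic averages of a nonnegative function -/
def dav (H : ℝ → ℝ≥0∞) (n : ℤ) (x : ℝ) : ℝ≥0∞ := ∫⁻ z, ENNReal.ofReal (dk n x z) * H z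

lemma dav_le (H : ℝ → ℝ≥0∞) (n : ℤ) (x : ℝ) :
    dav H n x ≤ ENNReal.ofReal (2 ^ n) * ∫⁻ z, H z := by
  unfold dav
  rw [← lintegral_const_mul' _ _ ENNReal.ofReal_ne_top]
  refine lintegral_mono fun z => ?_
  gcongr
  exact dk_le n x z

lemma dav_const (H : ℝ → ℝ≥0∞) {n : ℤ} {x z : ℝ} (h : ⌊(2:ℝ) ^ n * x⌋ = ⌊(2:ℝ) ^ n * z⌋) :
    dav H n x = dav H n z := by
  unfold dav dk
  simp only [h]

lemma dav_measurable {H : ℝ → ℝ≥0∞} (hH : Measurable H) (n : ℤ) : Measurable (dav H n) := by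
  have : Measurable (Function.uncurry fun x z : ℝ => ENNReal.ofReal (dk n x z) * H z) :=
    (ENNReal.measurable_ofReal.comp (dk_measurable n)).mul (hH.comp measurable_snd)
  exact this.lintegral_prod_right

lemma dav_succ (H : ℝ → ℝ≥0∞) (n : ℤ) (x : ℝ) : dav H (n + 1) x ≤ 2 * dav H n x := by
  unfold dav
  rw [← lintegral_const_mul' _ _ (by simp)]
  refine lintegral_mono fun z => ?_
  rw [← mul_assoc, show (2:ℝ≥0∞) = ENNReal.ofReal 2 by simp, ← ENNReal.ofReal_mul (by norm_num)]
  gcongr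
  unfold dk
  split_ifs with h1 h2 h2
  · rw [zpow_add_one₀ (by norm_num), mul_comm]
  · exact absurd (floor_succ h1) h2
  · positivity
  · simp

lemma dav_bdd {H : ℝ → ℝ≥0∞} (hH : ∫⁻ z, H z < ⊤) {lam : ℝ≥0∞} (h0 : 0 < lam) :
    ∃ n0 : ℤ, ∀ n ≤ n0, ∀ x, dav H n x ≤ lam := by
  by_cases hl : lam = ⊤
  · exact ⟨0, fun n _ x => by rw [hl]; exact le_top⟩
  obtain ⟨N, hN⟩ := pow_unbounded_of_one_lt ((∫⁻ z, H z) / lam).toReal (one_lt_two)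
  have hfin : (∫⁻ z, H z) / lam ≠ ⊤ := (ENNReal.div_lt_top hH.ne h0.ne').ne
  refine ⟨-N, fun n hn x => (dav_le H n x).trans ?_⟩
  have h1 : (∫⁻ z, H z) ≤ ENNReal.ofReal (2 ^ N) * lam := by
    rw [← ENNReal.div_le_iff h0.ne' hl, ← ENNReal.ofReal_toReal hfin]
    exact ENNReal.ofReal_le_ofReal hN.le
  calc _ ≤ ENNReal.ofReal (2 ^ (-(N:ℤ))) * (ENNReal.ofReal (2 ^ N) * lam) := by
        gcongr
        norm_num
    _ = lam := by
        rw [← mul_assoc, ← ENNReal.ofReal_mul (by positivity), zpow_neg, zpow_natCast,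
          inv_mul_cancel₀ (by positivity)]
        simp

/-- stopping time data of a Calderon-Zygmund decomposition -/
structure Stop (H : ℝ → ℝ≥0∞) (lam : ℝ≥0∞) (Om : Set ℝ) (ν : ℝ → ℤ) : Prop where
  mH : Measurable H
  mOm : MeasurableSet Om
  mν : Measurable ν
  gt : ∀ x ∈ Om, lam < dav H (ν x) x
  before : ∀ x ∈ Om, ∀ n < ν x, dav H n x ≤ lam
  off : ∀ x ∉ Om, ∀ n, dav H n x ≤ lam

lemma exists_stop {H : ℝ → ℝ≥0∞} (hm : Measurable H) (hH : ∫⁻ z, H z < ⊤) {lam : ℝ≥0∞}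
    (h0 : 0 < lam) : ∃ Om ν, Stop H lam Om ν := by
  obtain ⟨n0, hn0⟩ := dav_bdd hH h0
  set Om : Set ℝ := {x | ∃ n : ℤ, lam < dav H n x} with hOm
  have hex : ∀ x, ∃ n : ℤ, (x ∈ Om → lam < dav H n x ∧ ∀ m < n, dav H m x ≤ lam) ∧
      (x ∉ Om → n = 0) := by
    intro x
    by_cases hx : x ∈ Om
    · obtain ⟨n, hn, hmin⟩ := Int.exists_least_of_bdd (P := fun n => lam < dav H n x)
        ⟨n0, fun z hz => by
          by_contra hcon
          exact absurd (hn0 z (by omega) x) (not_le.2 hz)⟩ hx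
      refine ⟨n, fun _ => ⟨hn, fun m hmn => ?_⟩, fun h => absurd hx h⟩
      by_contra hcon
      have := hmin m (not_le.1 hcon)
      omega
    · exact ⟨0, fun h => absurd h hx, fun _ => rfl⟩
  choose ν hν1 hν2 using hex
  have hset : ∀ n, MeasurableSet {x | lam < dav H n x} := fun n =>
    measurableSet_lt measurable_const (dav_measurable hm n)
  have hOmm : MeasurableSet Om := by
    have : Om = ⋃ n : ℤ, {x | lam < dav H n x} := by ext x; simp [hOm]
    rw [this]; exact MeasurableSet.iUnion hset
  refine ⟨Om, ν, hm, hOmm, ?_, fun x hx => (hν1 x hx).1, fun x hx => (hν1 x hx).2, ?_⟩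
  · apply measurable_to_countable'
    intro n
    have : ν ⁻¹' {n} = (Om ∩ {x | lam < dav H n x} ∩ ⋂ m : ℤ, ⋂ _ : m < n, {x | lam < dav H m x}ᶜ) ∪
        (Omᶜ ∩ {_x | n = 0}) := by
      ext x
      simp only [Set.mem_preimage, Set.mem_singleton_iff, Set.mem_union, Set.mem_inter_iff,
        Set.mem_iInter, Set.mem_compl_iff, Set.mem_ofPred_eq, not_lt]
      by_cases hx : x ∈ Om
      · simp only [hx, true_and, not_true_eq_false, false_and, or_false]
        constructor
        · rintro rfl; exact hν1 x hx
        · rintro ⟨h1, h2⟩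
          obtain ⟨h3, h4⟩ := hν1 x hx
          rcases lt_trichotomy (ν x) n with h | h | h
          · exact absurd (h2 _ h) (not_le.2 h3)
          · exact h
          · exact absurd (h4 _ h) (not_le.2 h1)
      · simp only [hx, false_and, not_false_eq_true, true_and, false_or, hν2 x hx, eq_comm]
    rw [this]
    refine ((hOmm.inter (hset n)).inter ?_).union (hOmm.compl.inter (MeasurableSet.const _))
    exact MeasurableSet.iInter fun m => MeasurableSet.iInter fun _ => (hset m).compl
  · intro x hx n
    by_contra hcon
    exact hx ⟨n, not_le.1 hcon⟩

open Classical in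
/-- conditional expectation kernel on the stopping intervals -/
def ck (Om : Set ℝ) (ν : ℝ → ℤ) (y z : ℝ) : ℝ := if y ∈ Om then dk (ν y) y z else 0

section
variable {H : ℝ → ℝ≥0∞} {lam : ℝ≥0∞} {Om : Set ℝ} {ν : ℝ → ℤ}

lemma Stop.inv (hS : Stop H lam Om ν) {y z : ℝ} (hy : y ∈ Om)
    (h : ⌊(2:ℝ) ^ ν y * y⌋ = ⌊(2:ℝ) ^ ν y * z⌋) : z ∈ Om ∧ ν z = ν y := by
  have h1 : lam < dav H (ν y) z := by rw [← dav_const H h]; exact hS.gt y hy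
  have hz : z ∈ Om := by
    by_contra hz
    exact absurd (hS.off z hz _) (not_le.2 h1)
  refine ⟨hz, ?_⟩
  rcases lt_trichotomy (ν z) (ν y) with h2 | h2 | h2
  · have h3 := hS.gt z hz
    rw [← dav_const H (floor_mono h2.le h)] at h3
    exact absurd (hS.before y hy _ h2) (not_le.2 h3)
  · exact h2
  · exact absurd (hS.before z hz _ h2) (not_le.2 h1)

lemma Stop.avgKer (hS : Stop H lam Om ν) : AvgKer (ck Om ν) := by
  refine ⟨?_, ?_, ?_, ?_⟩
  · unfold ck dk
    have h2 : Measurable (fun p : ℝ × ℝ => (2:ℝ) ^ ν p.1) :=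
      (measurable_of_countable (fun n : ℤ => (2:ℝ) ^ n)).comp (hS.mν.comp measurable_fst)
    refine Measurable.ite (measurable_fst hS.mOm) ?_ measurable_const
    refine Measurable.ite ?_ h2 measurable_const
    apply measurableSet_eq_fun
    · exact Int.measurable_floor.comp (h2.mul measurable_fst)
    · exact Int.measurable_floor.comp (h2.mul measurable_snd)
  · intro x z
    unfold ck; split_ifs
    · exact dk_nonneg _ _ _
    · exact le_rfl
  · have key : ∀ y z, ck Om ν y z ≠ 0 → ck Om ν y z = ck Om ν z y := by
      intro y z hne
      have hy : y ∈ Om := by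
        by_contra hy; simp [ck, hy] at hne
      have hf : ⌊(2:ℝ) ^ ν y * y⌋ = ⌊(2:ℝ) ^ ν y * z⌋ := by
        by_contra hf; simp [ck, hy, dk, hf] at hne
      obtain ⟨hz, hzy⟩ := hS.inv hy hf
      simp only [ck, hy, hz, if_true, hzy]
      exact dk_symm _ _ _
    intro y z
    by_cases h1 : ck Om ν y z = 0
    · by_cases h2 : ck Om ν z y = 0
      · rw [h1, h2]
      · exact (key z y h2).symm
    · exact key y z h1
  · intro y
    unfold ck
    split_ifs
    · exact (dk_mass _ _).le
    · simp

lemma Stop.avg_on (hS : Stop H lam Om ν) {y : ℝ} (hy : y ∈ Om) :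
    ∫⁻ z, ENNReal.ofReal (ck Om ν y z) * H z ≤ 2 * lam := by
  simp only [ck, hy, if_true]
  have h := dav_succ H (ν y - 1) y
  rw [sub_add_cancel] at h
  refine h.trans ?_
  gcongr
  exact hS.before y hy _ (by omega)

lemma Stop.avg_off {y : ℝ} (hy : y ∉ Om) (G : ℝ → ℝ≥0∞) :
    ∫⁻ z, ENNReal.ofReal (ck Om ν y z) * G z = 0 := by
  simp [ck, hy]

lemma Stop.avg_total (hS : Stop H lam Om ν) :
    ∫⁻ y, ∫⁻ z, ENNReal.ofReal (ck Om ν y z) * H z ≤ ∫⁻ z, H z := by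
  have h := schur_L1 (T := fun y => ∫⁻ z, ENNReal.ofReal (ck Om ν y z) * H z)
    (k := fun y z => ENNReal.ofReal (ck Om ν y z)) (g := H) (b := 1)
    (ENNReal.measurable_ofReal.comp hS.avgKer.meas) hS.mH (fun _ => le_rfl) (fun z => by
      simp only [hS.avgKer.symm _ z]
      exact hS.avgKer.mass z)
  simpa using h

lemma Stop.volume_le (hS : Stop H lam Om ν) : lam * volume Om ≤ ∫⁻ z, H z := by
  refine le_trans ?_ hS.avg_total
  rw [← setLIntegral_const]
  refine le_trans ?_ (setLIntegral_le_lintegral Om _)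
  refine setLIntegral_mono' hS.mOm fun y hy => ?_
  have := hS.gt y hy
  simp only [ck, hy, if_true]
  exact this.le

lemma dav_tendsto (hm : Measurable H) (hH : ∫⁻ z, H z < ⊤) :
    ∀ᵐ x, Filter.Tendsto (fun n : ℕ => dav H n x) Filter.atTop (nhds (H x)) := by
  filter_upwards [VitaliFamily.ae_tendsto_lintegral_div
    (IsUnifLocDoublingMeasure.vitaliFamily (volume : Measure ℝ) 1) hm.aemeasurable hH.ne] with x hx
  have hδ : Filter.Tendsto (fun n : ℕ => (1/2:ℝ) ^ (n + 1)) Filter.atTop (nhdsWithin 0 (Set.Ioi 0)) := by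
    rw [tendsto_nhdsWithin_iff]
    constructor
    · exact (_root_.tendsto_pow_atTop_nhds_zero_of_lt_one (by norm_num) (by norm_num)).comp
        (Filter.tendsto_add_atTop_nat 1)
    · filter_upwards with n
      simp
  set w : ℕ → ℝ := fun n => (⌊(2:ℝ) ^ (n:ℤ) * x⌋ : ℝ) / 2 ^ (n:ℤ) + (1/2:ℝ) ^ (n + 1) with hw
  have hball : ∀ n : ℕ, Metric.closedBall (w n) ((1/2:ℝ) ^ (n + 1)) =
      Set.Icc ((⌊(2:ℝ) ^ (n:ℤ) * x⌋ : ℝ) / 2 ^ (n:ℤ)) ((⌊(2:ℝ) ^ (n:ℤ) * x⌋ + 1) / 2 ^ (n:ℤ)) := by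
    intro n
    rw [Real.closedBall_eq_Icc]
    congr 1
    · simp [hw]
    · simp only [hw, zpow_natCast]
      rw [add_div, add_assoc]
      congr 1
      rw [pow_succ, one_div, inv_pow]; ring
  have hmem : ∀ n : ℕ, x ∈ Set.Ico ((⌊(2:ℝ) ^ (n:ℤ) * x⌋ : ℝ) / 2 ^ (n:ℤ))
      ((⌊(2:ℝ) ^ (n:ℤ) * x⌋ + 1) / 2 ^ (n:ℤ)) := by
    intro n
    rw [← floor_set]; rfl
  have ht := IsUnifLocDoublingMeasure.tendsto_closedBall_filterAt (volume : Measure ℝ) (K := 1)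
    (x := x) w _ hδ (by
      filter_upwards with n
      rw [one_mul, hball]
      exact Set.Ico_subset_Icc_self (hmem n))
  refine (hx.comp ht).congr fun n => ?_
  simp only [Function.comp]
  rw [hball, setLIntegral_congr Ico_ae_eq_Icc.symm]
  unfold dav
  rw [dk_eq_indicator]
  have hv : volume (Set.Icc ((⌊(2:ℝ) ^ (n:ℤ) * x⌋ : ℝ) / 2 ^ (n:ℤ))
      ((⌊(2:ℝ) ^ (n:ℤ) * x⌋ + 1) / 2 ^ (n:ℤ))) = (ENNReal.ofReal (2 ^ (n:ℤ)))⁻¹ := by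
    rw [Real.volume_Icc, ← ENNReal.ofReal_inv_of_pos (by positivity)]
    congr 1; ring
  rw [hv, ENNReal.div_eq_inv_mul, inv_inv, ← lintegral_const_mul' _ _ ENNReal.ofReal_ne_top,
    ← lintegral_indicator measurableSet_Ico]
  congr 1; ext z
  by_cases hz : z ∈ Set.Ico ((⌊(2:ℝ) ^ (n:ℤ) * x⌋ : ℝ) / 2 ^ (n:ℤ))
      ((⌊(2:ℝ) ^ (n:ℤ) * x⌋ + 1) / 2 ^ (n:ℤ))
  · simp only [Set.indicator_of_mem hz]
  · simp only [Set.indicator_of_notMem hz]; simp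

lemma Stop.off_le (hS : Stop H lam Om ν) (hH : ∫⁻ z, H z < ⊤) : ∀ᵐ x, x ∉ Om → H x ≤ lam := by
  filter_upwards [dav_tendsto hS.mH hH] with x hx hxO
  exact le_of_tendsto' hx fun n => hS.off x hxO n

end

/-- the pointwise mixed norm -/
def Hf (r : ℝ) (f : ℤ → ℝ → ℂ) (x : ℝ) : ℝ≥0∞ := (∑' i : ℤ, ‖f i x‖ₑ ^ r) ^ (1 / r)

lemma Hf_measurable (r : ℝ) {f : ℤ → ℝ → ℂ} (hm : ∀ i, Measurable (f i)) : Measurable (Hf r f) := by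
  unfold Hf
  exact (Measurable.tsum fun i => (hm i).enorm.pow_const r).pow_const _

lemma fin_le_Hf {r : ℝ} (hr : 1 ≤ r) (f : ℤ → ℝ → ℂ) (I : Finset ℤ) (x : ℝ) :
    (∑ i ∈ I, ‖f i x‖ₑ ^ r) ^ (1 / r) ≤ Hf r f x := by
  unfold Hf
  gcongr
  exact ENNReal.sum_le_tsum I

lemma enorm_le_Hf {r : ℝ} (hr : 1 ≤ r) (f : ℤ → ℝ → ℂ) (i : ℤ) (x : ℝ) : ‖f i x‖ₑ ≤ Hf r f x := by
  refine le_trans (le_of_eq ?_) (fin_le_Hf hr f {i} x)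
  rw [Finset.sum_singleton, ← ENNReal.rpow_mul, mul_one_div_cancel (by linarith), ENNReal.rpow_one]

lemma minkowski {r : ℝ} (hr : 1 ≤ r) {k : ℝ → ℝ≥0∞} (hk : Measurable k) {g : ℤ → ℝ → ℝ≥0∞}
    (hg : ∀ i, Measurable (g i)) (I : Finset ℤ) (hfin : ∀ i, ∫⁻ z, k z * g i z < ⊤) :
    ∑ i ∈ I, (∫⁻ z, k z * g i z) ^ r ≤ (∫⁻ z, k z * (∑ i ∈ I, g i z ^ r) ^ (1 / r)) ^ r := by
  have hkg : ∀ i, Measurable fun z => k z * g i z := fun i => hk.mul (hg i)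
  rcases hr.eq_or_lt with h | h
  · subst h
    simp only [ENNReal.rpow_one, div_one, Finset.mul_sum]
    rw [lintegral_finsetSum _ (fun i _ => hkg i)]
  set a : ℤ → ℝ≥0∞ := fun i => ∫⁻ z, k z * g i z with ha
  set S := ∑ i ∈ I, a i ^ r with hS
  have hr0 : 0 < r := by linarith
  have hSfin : S ≠ ⊤ := by
    rw [hS]
    exact (ENNReal.sum_lt_top.2 fun i _ => ENNReal.rpow_lt_top_of_nonneg hr0.le (hfin i).ne).ne
  by_cases hS0 : S = 0
  · change S ≤ _
    rw [hS0]; exact zero_le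
  set N := ∫⁻ z, k z * (∑ i ∈ I, g i z ^ r) ^ (1 / r) with hN
  set q := r.conjExponent with hq
  have hpq : r.HolderConjugate q := Real.HolderConjugate.conjExponent h
  have hq1 : (r - 1) * q = r := by
    rw [hq, Real.conjExponent]; field_simp [show r - 1 ≠ 0 by linarith]
  have h1 : S ≤ S ^ (1 / q) * N := by
    calc S = ∫⁻ z, k z * ∑ i ∈ I, a i ^ (r - 1) * g i z := by
          simp only [Finset.mul_sum]
          have hkg' : ∀ i, Measurable fun z => k z * (a i ^ (r - 1) * g i z) :=
            fun i => hk.mul ((hg i).const_mul _)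
          rw [lintegral_finsetSum _ (fun i _ => hkg' i)]
          refine Finset.sum_congr rfl fun i _ => ?_
          have : ∀ z, k z * (a i ^ (r - 1) * g i z) = a i ^ (r - 1) * (k z * g i z) :=
            fun z => by ring
          simp only [this]
          rw [lintegral_const_mul _ (hkg i)]
          change a i ^ r = a i ^ (r - 1) * a i
          conv_lhs => rw [show r = (r - 1) + 1 by ring]
          rw [ENNReal.rpow_add_of_nonneg _ _ (by linarith) (by norm_num), ENNReal.rpow_one]
      _ ≤ ∫⁻ z, S ^ (1 / q) * (k z * (∑ i ∈ I, g i z ^ r) ^ (1 / r)) := by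
          refine lintegral_mono fun z => ?_
          rw [mul_left_comm]
          gcongr
          have := ENNReal.inner_le_Lp_mul_Lq I (fun i => a i ^ (r - 1)) (fun i => g i z) hpq.symm
          simp only [← ENNReal.rpow_mul, hq1] at this
          exact this
      _ = _ := lintegral_const_mul' _ _
          (ENNReal.rpow_lt_top_of_nonneg (by have := hpq.symm.pos; positivity) hSfin).ne
  have h2 : S ^ (1 / r) ≤ N := by
    have e : S = S ^ (1 / q) * S ^ (1 / r) := by
      rw [← ENNReal.rpow_add _ _ hS0 hSfin]
      have := hpq.symm.inv_add_inv_eq_one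
      rw [one_div, one_div, this, ENNReal.rpow_one]
    have hne : S ^ (1 / q) ≠ 0 := by
      simp [ENNReal.rpow_eq_zero_iff, hS0, hSfin]
    have hnt : S ^ (1 / q) ≠ ⊤ :=
      (ENNReal.rpow_lt_top_of_nonneg (by have := hpq.symm.pos; positivity) hSfin).ne
    conv_lhs at h1 => rw [e]
    exact (ENNReal.mul_le_mul_iff_right hne hnt).1 h1
  calc S = (S ^ (1 / r)) ^ r := by
        rw [← ENNReal.rpow_mul, one_div_mul_cancel hr0.ne', ENNReal.rpow_one]
    _ ≤ N ^ r := by gcongr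

lemma rpow_le_mul {r : ℝ} (hr : 1 ≤ r) {a b : ℝ≥0∞} (h : a ≤ b) : a ^ r ≤ b ^ (r - 1) * a := by
  conv_lhs => rw [show r = (r - 1) + 1 by ring]
  rw [ENNReal.rpow_add_of_nonneg _ _ (by linarith) (by norm_num), ENNReal.rpow_one]
  gcongr

open Classical in
/-- good part -/
def gpart (Om : Set ℝ) (ν : ℝ → ℤ) (f : ℤ → ℝ → ℂ) (i : ℤ) (x : ℝ) : ℂ :=
  (if x ∈ Om then 0 else f i x) + avgOp (ck Om ν) (f i) x

open Classical in
/-- bad part -/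
def bpart (Om : Set ℝ) (ν : ℝ → ℤ) (f : ℤ → ℝ → ℂ) (i : ℤ) (x : ℝ) : ℂ :=
  (if x ∈ Om then f i x else 0) - avgOp (ck Om ν) (f i) x

lemma gb_add (Om : Set ℝ) (ν : ℝ → ℤ) (f : ℤ → ℝ → ℂ) :
    f = fun i x => gpart Om ν f i x + bpart Om ν f i x := by
  ext i x
  unfold gpart bpart
  split_ifs <;> simp

section
variable {H : ℝ → ℝ≥0∞} {lam : ℝ≥0∞} {Om : Set ℝ} {ν : ℝ → ℤ} {f : ℤ → ℝ → ℂ}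

lemma gpart_meas (hS : Stop H lam Om ν) (hm : ∀ i, Measurable (f i)) (i : ℤ) :
    Measurable (gpart Om ν f i) := by
  unfold gpart
  exact (Measurable.ite hS.mOm measurable_const (hm i)).add (hS.avgKer.measurable_avgOp (hm i))

lemma bpart_meas (hS : Stop H lam Om ν) (hm : ∀ i, Measurable (f i)) (i : ℤ) :
    Measurable (bpart Om ν f i) := by
  unfold bpart
  exact (Measurable.ite hS.mOm (hm i) measurable_const).sub (hS.avgKer.measurable_avgOp (hm i))

open Classical in
lemma ite_integrable (hS : Stop H lam Om ν) (hm : ∀ i, Measurable (f i))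
    (hi : ∀ i, Integrable (f i)) (i : ℤ) : Integrable (fun x => if x ∈ Om then f i x else 0) := by
  refine (hi i).mono (Measurable.ite hS.mOm (hm i) measurable_const).aestronglyMeasurable ?_
  filter_upwards with x
  split_ifs <;> simp

open Classical in
lemma gpart_integrable (hS : Stop H lam Om ν) (hm : ∀ i, Measurable (f i))
    (hi : ∀ i, Integrable (f i)) (i : ℤ) : Integrable (gpart Om ν f i) := by
  refine Integrable.add ?_ (hS.avgKer.integrable_avgOp (hm i) (hi i))
  refine (hi i).mono (Measurable.ite hS.mOm measurable_const (hm i)).aestronglyMeasurable ?_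
  filter_upwards with x
  split_ifs <;> simp

lemma bpart_integrable (hS : Stop H lam Om ν) (hm : ∀ i, Measurable (f i))
    (hi : ∀ i, Integrable (f i)) (i : ℤ) : Integrable (bpart Om ν f i) :=
  Integrable.sub (ite_integrable hS hm hi i) (hS.avgKer.integrable_avgOp (hm i) (hi i))

lemma good_bound {r : ℝ} (hr : 1 ≤ r) (hS : Stop (Hf r f) lam Om ν) (hm : ∀ i, Measurable (f i))
    (hl : lam < ⊤) (hH : ∫⁻ z, Hf r f z < ⊤) (I : Finset ℤ) :
    ∑ i ∈ I, ∫⁻ x, ‖gpart Om ν f i x‖ₑ ^ r ≤ (2 * lam) ^ (r - 1) * (2 * ∫⁻ z, Hf r f z) := by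
  have hr0 : 0 < r := by linarith
  set M : ℝ → ℝ≥0∞ := fun x => ∫⁻ z, ENNReal.ofReal (ck Om ν x z) * Hf r f z with hM
  rw [← lintegral_finsetSum _ (fun i _ => (gpart_meas hS hm i).enorm.pow_const r)]
  calc _ ≤ ∫⁻ x, (2 * lam) ^ (r - 1) * (Hf r f x + M x) := by
        refine lintegral_mono_ae ?_
        filter_upwards [hS.off_le hH] with x hx
        by_cases hxO : x ∈ Om
        · have hMx : M x ≤ 2 * lam := hS.avg_on hxO
          have hk : Measurable fun z => ENNReal.ofReal (ck Om ν x z) :=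
            ENNReal.measurable_ofReal.comp (hS.avgKer.meas_left x)
          have hle : ∀ i, ∫⁻ z, ENNReal.ofReal (ck Om ν x z) * ‖f i z‖ₑ ≤ M x := fun i => by
            refine lintegral_mono fun z => ?_
            gcongr
            exact enorm_le_Hf hr f i z
          have hlt : 2 * lam < ⊤ := ENNReal.mul_lt_top (by simp) hl
          calc _ ≤ ∑ i ∈ I, (∫⁻ z, ENNReal.ofReal (ck Om ν x z) * ‖f i z‖ₑ) ^ r := by
                refine Finset.sum_le_sum fun i _ => ?_
                gcongr
                simp only [gpart, hxO, if_true, zero_add]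
                exact enorm_avgOp_le hS.avgKer _ _
            _ ≤ (∫⁻ z, ENNReal.ofReal (ck Om ν x z) * (∑ i ∈ I, ‖f i z‖ₑ ^ r) ^ (1 / r)) ^ r :=
                minkowski hr hk (fun i => (hm i).enorm) I
                  (fun i => ((hle i).trans hMx).trans_lt hlt)
            _ ≤ M x ^ r := by
                gcongr
                refine lintegral_mono fun z => ?_
                gcongr
                exact fin_le_Hf hr f I z
            _ ≤ (2 * lam) ^ (r - 1) * M x := rpow_le_mul hr hMx
            _ ≤ _ := by gcongr; exact le_add_self
        · have hav : ∀ i, avgOp (ck Om ν) (f i) x = 0 := fun i => by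
            simp [avgOp, ck, hxO]
          simp only [gpart, hxO, if_false, hav, add_zero]
          calc ∑ i ∈ I, ‖f i x‖ₑ ^ r = ((∑ i ∈ I, ‖f i x‖ₑ ^ r) ^ (1 / r)) ^ r := by
                rw [← ENNReal.rpow_mul, one_div_mul_cancel hr0.ne', ENNReal.rpow_one]
            _ ≤ Hf r f x ^ r := by gcongr; exact fin_le_Hf hr f I x
            _ ≤ lam ^ (r - 1) * Hf r f x := rpow_le_mul hr (hx hxO)
            _ ≤ _ := by
                gcongr
                · rw [two_mul]; exact le_self_add
                · exact le_self_add
    _ = (2 * lam) ^ (r - 1) * ((∫⁻ x, Hf r f x) + ∫⁻ x, M x) := by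
        rw [lintegral_const_mul' _ _ (ENNReal.rpow_lt_top_of_nonneg (by linarith)
          (ENNReal.mul_lt_top (by simp) hl).ne).ne, lintegral_add_left (Hf_measurable r hm)]
    _ ≤ _ := by
        rw [two_mul (∫⁻ z, Hf r f z)]
        exact mul_le_mul' le_rfl (add_le_add le_rfl hS.avg_total)

end

lemma wk_far {q u : ℝ} (hq : 1 ≤ q) (hu : 2 ≤ |u|) : q * th (q * u) ≤ 2 * q⁻¹ * th u := by
  unfold th
  have h1 : 4 ≤ u ^ 2 := by rw [← sq_abs]; nlinarith
  have hq0 : 0 < q := by linarith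
  rw [← div_eq_mul_inv, div_le_iff₀ (by positivity)]
  have : 2 * q⁻¹ * (1 + u ^ 2)⁻¹ * (1 + (q * u) ^ 2) = 2 * (1 + (q * u) ^ 2) / (q * (1 + u ^ 2)) := by
    field_simp
  rw [this, le_div_iff₀ (by positivity)]
  nlinarith [sq_nonneg q, mul_nonneg (sq_nonneg q) (sq_nonneg u), mul_le_mul_of_nonneg_left h1 (sq_nonneg q)]

lemma th_half {s t : ℝ} (h : |t| ≤ 2 * |s|) : th s ≤ 4 * th t := by
  unfold th
  have h1 : t ^ 2 ≤ 4 * s ^ 2 := by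
    rw [← sq_abs t, ← sq_abs s]; nlinarith [abs_nonneg t, abs_nonneg s]
  rw [inv_le_iff_one_le_mul₀ (by positivity), mul_right_comm, ← div_eq_mul_inv,
    le_div_iff₀ (by positivity)]
  linarith

/-- the kernel dominating the bad part -/
def bkr (A : ℝ) (n i : ℤ) (t : ℝ) : ℝ := 10 * A * (1 / 2) ^ (i - n).natAbs * wk (2 ^ (min i n)) t

lemma kdiff {A : ℝ} {K : ℤ → ℝ → ℂ} (hK : GoodKernel A K) (n i : ℤ) {s t : ℝ}
    (hst : (2:ℝ) ^ n * |s - t| ≤ 1) (ht : 2 ≤ (2:ℝ) ^ n * |t|) :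
    ‖K i s - K i t‖ ≤ bkr A n i t := by
  have hA := hK.nonneg
  have hn : (0:ℝ) < 2 ^ n := by positivity
  unfold bkr
  rcases le_total i n with h | h
  · obtain ⟨k, hk⟩ := Int.le.dest h
    have e1 : (i - n).natAbs = k := by omega
    have e2 : (2:ℝ) ^ i = 2 ^ n * (1 / 2) ^ k := by
      rw [← hk, zpow_add₀ (by norm_num), zpow_natCast, mul_assoc, ← mul_pow]; norm_num
    rw [e1, min_eq_left h]
    have hp : (0:ℝ) ≤ (1 / 2) ^ k := by positivity
    have hp1 : ((1:ℝ) / 2) ^ k ≤ 1 := pow_le_one₀ (by norm_num) (by norm_num)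
    have h3 : (2:ℝ) ^ i * |s - t| ≤ (1 / 2) ^ k := by
      rw [e2]; nlinarith
    have h4 := hK.smooth i s t (h3.trans hp1)
    have hw : 0 ≤ wk (2 ^ i) t := wk_nonneg (by positivity) _
    refine h4.trans ?_
    gcongr
    nlinarith [mul_le_mul_of_nonneg_left h3 hA, mul_nonneg hA hp]
  · obtain ⟨k, hk⟩ := Int.le.dest h
    have e1 : (i - n).natAbs = k := by omega
    have e2 : (2:ℝ) ^ i = 2 ^ n * 2 ^ k := by
      rw [← hk, zpow_add₀ (by norm_num), zpow_natCast]
    rw [e1, min_eq_right h]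
    have hq : (1:ℝ) ≤ 2 ^ k := one_le_pow₀ (by norm_num)
    have hc : (0:ℝ) < 2 ^ i := by positivity
    have hts : |t| ≤ 2 * |s| := by
      have h5 : |t| ≤ |s| + |s - t| := by
        have := abs_sub_abs_le_abs_sub t s
        rw [abs_sub_comm] at this; linarith
      have h6 : 2 * |s - t| ≤ |t| := by
        by_contra hcon
        push Not at hcon
        nlinarith
      linarith
    have h7 : wk (2 ^ i) s ≤ 4 * wk (2 ^ i) t := by
      unfold wk
      have := th_half (s := 2 ^ i * s) (t := 2 ^ i * t) (by
        rw [abs_mul, abs_mul, abs_of_pos hc]; nlinarith)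
      nlinarith
    have h8 : wk (2 ^ i) t ≤ 2 * (1 / 2) ^ k * wk (2 ^ n) t := by
      unfold wk
      have := wk_far hq (u := 2 ^ n * t) (by rw [abs_mul, abs_of_pos hn]; exact ht)
      have e3 : ((1:ℝ) / 2) ^ k = (2 ^ k)⁻¹ := by rw [one_div, inv_pow]
      rw [e3, e2, show (2:ℝ) ^ n * 2 ^ k * t = 2 ^ k * (2 ^ n * t) by ring]
      nlinarith
    have h9 := norm_sub_le (K i s) (K i t)
    have h10 := hK.size i s
    have h11 := hK.size i t
    calc _ ≤ 5 * (A * wk (2 ^ i) t) := by nlinarith [mul_le_mul_of_nonneg_left h7 hA]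
      _ ≤ 5 * (A * (2 * (1 / 2) ^ k * wk (2 ^ n) t)) := by gcongr
      _ = _ := by ring

section
variable {A : ℝ} {K : ℤ → ℝ → ℂ} {H : ℝ → ℝ≥0∞} {lam : ℝ≥0∞} {Om : Set ℝ} {ν : ℝ → ℤ}
  {f : ℤ → ℝ → ℂ}

/-- enlarged exceptional set -/
def OmS (Om : Set ℝ) (ν : ℝ → ℤ) : Set ℝ := {x | ∃ z ∈ Om, (2:ℝ) ^ ν z * |x - z| < 2}

lemma OmS_volume (hS : Stop H lam Om ν) : volume (OmS Om ν) ≤ 5 * volume Om := by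
  set P : ℤ × ℤ → Set ℝ := fun p => {z | z ∈ Om ∧ ν z = p.1 ∧ p.2 = ⌊(2:ℝ) ^ p.1 * z⌋} with hP
  classical
  set Q : ℤ × ℤ → Set ℝ := fun p => if (P p).Nonempty then
    Set.Icc (((p.2:ℝ) - 2) / 2 ^ p.1) ((p.2 + 3) / 2 ^ p.1) else ∅ with hQ
  have hsub : OmS Om ν ⊆ ⋃ p, Q p := by
    rintro x ⟨z, hz, hx⟩
    rw [Set.mem_iUnion]
    refine ⟨(ν z, ⌊(2:ℝ) ^ ν z * z⌋), ?_⟩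
    have hne : (P (ν z, ⌊(2:ℝ) ^ ν z * z⌋)).Nonempty := ⟨z, hz, rfl, rfl⟩
    have hc : (0:ℝ) < 2 ^ ν z := by positivity
    simp only [hQ, hne, if_true, Set.mem_Icc, div_le_iff₀ hc, le_div_iff₀ hc]
    have h1 := Int.floor_le ((2:ℝ) ^ ν z * z)
    have h2 := Int.lt_floor_add_one ((2:ℝ) ^ ν z * z)
    have hx : |(2:ℝ) ^ ν z * (x - z)| < 2 := by rwa [abs_mul, abs_of_pos hc]
    rw [abs_lt] at hx
    constructor <;> nlinarith
  have hvol : ∀ p, volume (Q p) ≤ 5 * volume (P p) := by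
    intro p
    by_cases hne : (P p).Nonempty
    · obtain ⟨z, hz, hν, hfl⟩ := hne
      have heq : P p = Set.Ico ((p.2:ℝ) / 2 ^ p.1) ((p.2 + 1) / 2 ^ p.1) := by
        rw [← floor_set]
        ext y
        constructor
        · exact fun h => h.2.2
        · intro h
          have h' : p.2 = ⌊(2:ℝ) ^ p.1 * y⌋ := h
          have := hS.inv hz (z := y) (by rw [hν, ← hfl, ← h'])
          exact ⟨this.1, this.2.trans hν, h'⟩
      have hne : (P p).Nonempty := ⟨z, hz, hν, hfl⟩
      rw [heq, Real.volume_Ico]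
      simp only [hQ, hne, if_true, Real.volume_Icc]
      rw [show (5:ℝ≥0∞) = ENNReal.ofReal 5 by simp, ← ENNReal.ofReal_mul (by norm_num)]
      apply ENNReal.ofReal_le_ofReal
      apply le_of_eq
      ring
    · simp [hQ, hne]
  have hmeas : ∀ p, MeasurableSet (P p) := by
    intro p
    refine hS.mOm.inter (MeasurableSet.inter (hS.mν (measurableSet_singleton _)) ?_)
    change MeasurableSet {z : ℝ | p.2 = ⌊(2:ℝ) ^ p.1 * z⌋}
    rw [floor_set]; exact measurableSet_Ico
  have hdisj : Pairwise (Function.onFun Disjoint P) := by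
    intro p q hpq
    refine Set.disjoint_left.2 ?_
    rintro z ⟨_, h1, h2⟩ ⟨_, h3, h4⟩
    have h5 : p.1 = q.1 := h1.symm.trans h3
    exact hpq (Prod.ext h5 (by rw [h2, h4, h5]))
  calc volume (OmS Om ν) ≤ volume (⋃ p, Q p) := measure_mono hsub
    _ ≤ ∑' p, volume (Q p) := measure_iUnion_le _
    _ ≤ ∑' p, 5 * volume (P p) := ENNReal.tsum_le_tsum hvol
    _ = 5 * volume (⋃ p, P p) := by rw [ENNReal.tsum_mul_left, measure_iUnion hdisj hmeas]
    _ ≤ 5 * volume Om := by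
        gcongr
        exact Set.iUnion_subset fun p z hz => hz.1

/-- majorant of the bad part -/
def badP (A : ℝ) (ν : ℝ → ℤ) (f : ℤ → ℝ → ℂ) (i : ℤ) (x : ℝ) : ℝ≥0∞ :=
  ∫⁻ z, ENNReal.ofReal (bkr A (ν z) i (x - z)) * ‖f i z‖ₑ

lemma bkr_meas (hν : Measurable ν) (A : ℝ) (i : ℤ) :
    Measurable (Function.uncurry fun x z : ℝ => ENNReal.ofReal (bkr A (ν z) i (x - z))) := by
  unfold bkr wk th
  have h2 : Measurable (fun p : ℝ × ℝ => (2:ℝ) ^ (min i (ν p.2))) :=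
    (measurable_of_countable (fun n : ℤ => (2:ℝ) ^ (min i n))).comp (hν.comp measurable_snd)
  have h3 : Measurable (fun p : ℝ × ℝ => 10 * A * (1 / 2 : ℝ) ^ (i - ν p.2).natAbs) :=
    (measurable_of_countable (fun n : ℤ => 10 * A * (1 / 2 : ℝ) ^ (i - n).natAbs)).comp
      (hν.comp measurable_snd)
  refine ENNReal.measurable_ofReal.comp (h3.mul (h2.mul ?_))
  exact (measurable_const.add ((h2.mul (measurable_fst.sub measurable_snd)).pow_const 2)).inv

lemma badP_meas (hν : Measurable ν) (hm : ∀ i, Measurable (f i)) (i : ℤ) :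
    Measurable (badP A ν f i) := by
  have : Measurable (Function.uncurry fun x z : ℝ =>
      ENNReal.ofReal (bkr A (ν z) i (x - z)) * ‖f i z‖ₑ) :=
    (bkr_meas hν A i).mul ((hm i).enorm.comp measurable_snd)
  exact this.lintegral_prod_right

lemma badP_sum {r : ℝ} (hr : 1 ≤ r) (hA : 0 ≤ A) (hν : Measurable ν) (hm : ∀ i, Measurable (f i))
    (I : Finset ℤ) :
    ∫⁻ x, ∑ i ∈ I, badP A ν f i x ≤
      ENNReal.ofReal (10 * A * Real.pi) * gsum (1 / 2) * ∫⁻ z, Hf r f z := by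
  have hmm : ∀ i, Measurable (Function.uncurry fun x z : ℝ =>
      ENNReal.ofReal (bkr A (ν z) i (x - z)) * ‖f i z‖ₑ) := fun i =>
    (bkr_meas hν A i).mul ((hm i).enorm.comp measurable_snd)
  have hone : ∀ i, ∫⁻ x, badP A ν f i x = ∫⁻ z,
      ENNReal.ofReal (10 * A * Real.pi) * (ENNReal.ofReal ((1 / 2) ^ (i - ν z).natAbs) * ‖f i z‖ₑ) := by
    intro i
    unfold badP
    rw [lintegral_lintegral_swap (hmm i).aemeasurable]
    refine lintegral_congr fun z => ?_
    rw [lintegral_mul_const _ ((bkr_meas hν A i).of_uncurry_right)]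
    unfold bkr
    rw [wk_int2 (by positivity) (by positivity), ← mul_assoc, ← ENNReal.ofReal_mul (by positivity)]
    congr 2; ring
  rw [lintegral_finsetSum _ (fun i _ => badP_meas hν hm i)]
  simp only [hone]
  have hmz : ∀ i, Measurable fun z => ENNReal.ofReal (10 * A * Real.pi) *
      (ENNReal.ofReal ((1 / 2) ^ (i - ν z).natAbs) * ‖f i z‖ₑ) := by
    intro i
    have h3 : Measurable (fun z : ℝ => ENNReal.ofReal ((1 / 2 : ℝ) ^ (i - ν z).natAbs)) :=
      (measurable_of_countable (fun n : ℤ => ENNReal.ofReal ((1 / 2 : ℝ) ^ (i - n).natAbs))).comp hν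
    exact (h3.mul (hm i).enorm).const_mul _
  rw [← lintegral_finsetSum _ (fun i _ => hmz i)]
  rw [← lintegral_const_mul _ (Hf_measurable r hm)]
  refine lintegral_mono fun z => ?_
  rw [← Finset.mul_sum, mul_assoc (ENNReal.ofReal (10 * A * Real.pi))]
  refine mul_le_mul' le_rfl ?_
  calc _ ≤ ∑ i ∈ I, ENNReal.ofReal ((1 / 2) ^ (i - ν z).natAbs) * Hf r f z := by
        refine Finset.sum_le_sum fun i _ => ?_
        gcongr
        exact enorm_le_Hf hr f i z
    _ ≤ _ := by
        rw [← Finset.sum_mul]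
        gcongr
        exact gsum_finset _ _ _

lemma bad_ptwise (hK : GoodKernel A K) (hS : Stop H lam Om ν) (hm : ∀ i, Measurable (f i))
    (hi : ∀ i, Integrable (f i)) {x : ℝ} (hx : x ∉ OmS Om ν) (i : ℤ) :
    ‖conv (K i) (bpart Om ν f i) x‖ₑ ≤ badP A ν f i x := by
  classical
  set W : ℝ → ℂ := fun y => K i (x - y) with hW
  have hWm : Measurable W := ((hK.cont i).comp (continuous_const.sub continuous_id)).measurable
  have hB : ∀ y, ‖W y‖ ≤ A * 2 ^ i := fun y => K_bdd hK i _
  have hκ := hS.avgKer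
  have hA := hK.nonneg
  have hint1 : Integrable (fun y => W y * (if y ∈ Om then f i y else 0)) :=
    conv_integrand hK i (ite_integrable hS hm hi i) x
  have hint2 : Integrable (fun y => W y * avgOp (ck Om ν) (f i) y) :=
    conv_integrand hK i (hκ.integrable_avgOp (hm i) (hi i)) x
  have hint3 : Integrable (fun z => avgOp (ck Om ν) W z * f i z) := by
    refine (hi i).bdd_mul (c := A * 2 ^ i) (hκ.measurable_avgOp hWm).aestronglyMeasurable ?_
    filter_upwards with z
    have : ‖avgOp (ck Om ν) W z‖ₑ ≤ ENNReal.ofReal (A * 2 ^ i) := by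
      refine (enorm_avgOp_le hκ W z).trans ?_
      calc _ ≤ ∫⁻ y, ENNReal.ofReal (ck Om ν z y) * ENNReal.ofReal (A * 2 ^ i) := by
            refine lintegral_mono fun y => ?_
            gcongr
            exact enorm_le_ofReal (hB y)
        _ ≤ 1 * ENNReal.ofReal (A * 2 ^ i) := by
            rw [lintegral_mul_const' _ _ ENNReal.ofReal_ne_top]
            gcongr
            exact hκ.mass z
        _ = _ := one_mul _
    rw [← ofReal_norm] at this
    exact (ENNReal.ofReal_le_ofReal_iff (by positivity)).1 this
  have e : conv (K i) (bpart Om ν f i) x =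
      ∫ z, (W z * (if z ∈ Om then f i z else 0) - avgOp (ck Om ν) W z * f i z) := by
    rw [integral_sub hint1 hint3, ← hκ.adj (hm i) (hi i) hWm hB, ← integral_sub hint1 hint2]
    unfold conv bpart
    congr 1; ext y
    rw [mul_sub]
  rw [e]
  refine (enorm_integral_le_lintegral_enorm _).trans (lintegral_mono fun z => ?_)
  by_cases hz : z ∈ Om
  · simp only [hz, if_true]
    rw [← sub_mul, enorm_mul]
    gcongr
    have hz2 : 2 ≤ (2:ℝ) ^ ν z * |x - z| := by
      by_contra hcon
      exact hx ⟨z, hz, not_le.1 hcon⟩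
    have hck : ck Om ν z = dk (ν z) z := by ext y; simp [ck, hz]
    have hint4 : Integrable (fun y => (dk (ν z) z y : ℂ) * W y) := by
      have h0 : Integrable (fun y => W y * (dk (ν z) z y : ℂ)) :=
        ((avgKer_dk (ν z)).integrable_ker z).ofReal.bdd_mul (c := A * 2 ^ i)
          hWm.aestronglyMeasurable (by filter_upwards with y using hB y)
      simpa only [mul_comm] using h0
    have hint5 : Integrable (fun y => (dk (ν z) z y : ℂ) * W z) :=
      ((avgKer_dk (ν z)).integrable_ker z).ofReal.mul_const _
    have e2 : W z - avgOp (ck Om ν) W z = avgOp (dk (ν z)) (fun y => W z - W y) z := by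
      unfold avgOp
      simp only [mul_sub]
      rw [integral_sub hint5 hint4, integral_mul_const, integral_complex_ofReal, dk_integral, hck]
      simp
    rw [e2]
    refine (enorm_avgOp_le (avgKer_dk _) _ _).trans ?_
    calc _ ≤ ∫⁻ y, ENNReal.ofReal (dk (ν z) z y) * ENNReal.ofReal (bkr A (ν z) i (x - z)) := by
          refine lintegral_mono fun y => ?_
          by_cases hfl : ⌊(2:ℝ) ^ ν z * z⌋ = ⌊(2:ℝ) ^ ν z * y⌋
          · gcongr
            apply enorm_le_ofReal
            rw [norm_sub_rev]
            refine kdiff hK (ν z) i ?_ hz2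
            have := floor_close hfl
            rwa [show x - y - (x - z) = z - y by ring]
          · simp [dk, hfl]
      _ = _ := by
          rw [lintegral_mul_const' _ _ ENNReal.ofReal_ne_top, dk_mass, one_mul]
  · have : avgOp (ck Om ν) W z = 0 := by simp [avgOp, ck, hz]
    simp [hz, this]

end

/-- level set of the variation in a finite window -/
def SM (K : ℤ → ℝ → ℂ) (r : ℝ) (f : ℤ → ℝ → ℂ) (lam : ℝ≥0∞) (M : ℕ) : Set ℝ :=
  {x | ∃ (k : ℕ) (n : ℕ → ℤ), Monotone n ∧ -(M:ℤ) ≤ n 0 ∧ n k ≤ M ∧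
    lam ^ r < ∑ l ∈ Finset.range k, ‖csum K f (Finset.Ioc (n l) (n (l + 1))) x‖ₑ ^ r}

lemma SM_mono (K : ℤ → ℝ → ℂ) (r : ℝ) (f : ℤ → ℝ → ℂ) (lam : ℝ≥0∞) : Monotone (SM K r f lam) := by
  rintro M M' hM x ⟨k, n, h1, h2, h3, h4⟩
  exact ⟨k, n, h1, by omega, by omega, h4⟩

lemma pt_combine {r : ℝ} (hr : 1 ≤ r) {μ : ℝ≥0∞} (k : ℕ) (Z X Y : ℕ → ℝ≥0∞)
    (hZ : ∀ l, Z l ≤ X l + Y l) (hX : ∑ l ∈ Finset.range k, X l ^ r ≤ μ ^ r)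
    (hY : ∑ l ∈ Finset.range k, Y l ≤ μ) : ∑ l ∈ Finset.range k, Z l ^ r ≤ (4 * μ) ^ r := by
  have hr0 : 0 ≤ r := by linarith
  have hYr : ∑ l ∈ Finset.range k, Y l ^ r ≤ μ ^ r := by
    calc _ ≤ ∑ l ∈ Finset.range k, μ ^ (r - 1) * Y l := by
          refine Finset.sum_le_sum fun l hl => rpow_le_mul hr ?_
          exact (Finset.single_le_sum (f := Y) (fun _ _ => zero_le) hl).trans hY
      _ ≤ μ ^ (r - 1) * μ := by rw [← Finset.mul_sum]; gcongr
      _ = μ ^ r := by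
          conv_rhs => rw [show r = (r - 1) + 1 by ring]
          rw [ENNReal.rpow_add_of_nonneg _ _ (by linarith) (by norm_num), ENNReal.rpow_one]
  calc _ ≤ ∑ l ∈ Finset.range k, (2:ℝ≥0∞) ^ (r - 1) * (X l ^ r + Y l ^ r) := by
        refine Finset.sum_le_sum fun l _ => ?_
        refine le_trans ?_ (ENNReal.rpow_add_le_mul_rpow_add_rpow _ _ hr)
        gcongr
        exact hZ l
    _ ≤ 2 ^ (r - 1) * (μ ^ r + μ ^ r) := by
        rw [← Finset.mul_sum, Finset.sum_add_distrib]
        gcongr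
    _ = (2 * μ) ^ r := by
        rw [← two_mul, ← mul_assoc, ENNReal.mul_rpow_of_nonneg _ _ hr0]
        congr 1
        conv_rhs => rw [show r = (r - 1) + 1 by ring]
        rw [ENNReal.rpow_add_of_nonneg _ _ (by linarith) (by norm_num), ENNReal.rpow_one]
    _ ≤ _ := by gcongr; norm_num

lemma window {A : ℝ} {K : ℤ → ℝ → ℂ} (hK : GoodKernel A K) {r : ℝ} (hr1 : 1 ≤ r) (hr2 : r < 2) :
    ∃ C : ℝ≥0∞, C < ⊤ ∧ ∀ (f : ℤ → ℝ → ℂ), (∀ i, Measurable (f i)) → (∀ i, Integrable (f i)) →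
      ∫⁻ z, Hf r f z < ⊤ → ∀ μ : ℝ≥0∞, 0 < μ → μ < ⊤ → ∀ M : ℕ,
      μ * volume (SM K r f (4 * μ) M) ≤ C * ∫⁻ z, Hf r f z := by
  obtain ⟨C0, hC0, hstrong⟩ := strong_rr hK hr1 hr2
  set C1 := ENNReal.ofReal (10 * A * Real.pi) * gsum (1 / 2) with hC1
  have hC1t : C1 < ⊤ := ENNReal.mul_lt_top ENNReal.ofReal_lt_top (gsum_lt_top (by norm_num) (by norm_num))
  have hr0 : 0 < r := by linarith
  refine ⟨C0 * (2 ^ (r - 1) * 2) + C1 + 5, ?_, ?_⟩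
  · have : (2:ℝ≥0∞) ^ (r - 1) < ⊤ := ENNReal.rpow_lt_top_of_nonneg (by linarith) (by simp)
    refine ENNReal.add_lt_top.2 ⟨ENNReal.add_lt_top.2 ⟨?_, hC1t⟩, by simp⟩
    exact ENNReal.mul_lt_top hC0 (ENNReal.mul_lt_top this (by simp))
  intro f hm hi hH μ hμ0 hμt M
  obtain ⟨Om, ν, hS⟩ := exists_stop (Hf_measurable r hm) hH hμ0
  set I : Finset ℤ := Finset.Ioc (-(M:ℤ)) (-(M:ℤ) + (2 * M : ℕ)) with hI
  obtain ⟨G, hGm, hG, hGint⟩ := hstrong (gpart Om ν f) (gpart_meas hS hm)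
    (gpart_integrable hS hm hi) (-(M:ℤ)) (2 * M)
  set P : ℝ → ℝ≥0∞ := fun x => ∑ i ∈ I, badP A ν f i x with hP
  have hPm : Measurable P := Finset.measurable_fun_sum _ fun i _ => badP_meas hS.mν hm i
  have hsub : SM K r f (4 * μ) M ⊆ {x | μ ^ r ≤ G x} ∪ {x | μ ≤ P x} ∪ OmS Om ν := by
    rintro x ⟨k, n, hn, h0, hk, hlt⟩
    by_contra hcon
    simp only [Set.mem_union, Set.mem_ofPred_eq, not_or, not_le] at hcon
    obtain ⟨⟨hGx, hPx⟩, hxO⟩ := hcon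
    have hk' : n k ≤ -(M:ℤ) + (2 * M : ℕ) := by push_cast; omega
    refine absurd hlt (not_lt.2 ?_)
    refine pt_combine hr1 k _ (fun l => ‖csum K (gpart Om ν f) (Finset.Ioc (n l) (n (l + 1))) x‖ₑ)
      (fun l => ‖csum K (bpart Om ν f) (Finset.Ioc (n l) (n (l + 1))) x‖ₑ) ?_ ?_ ?_
    · intro l
      have e := csum_add hK (gpart_integrable hS hm hi) (bpart_integrable hS hm hi)
        (Finset.Ioc (n l) (n (l + 1))) x
      rw [← gb_add Om ν f] at e
      rw [e]
      exact enorm_add_le _ _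
    · exact (hG x k n hn h0 hk').trans hGx.le
    · refine (csum_blocks _ n hn k h0 hk' x).trans ?_
      refine le_trans ?_ hPx.le
      exact Finset.sum_le_sum fun i _ => bad_ptwise hK hS hm hi hxO i
  have hv1 : μ * volume {x | μ ^ r ≤ G x} ≤ C0 * (2 ^ (r - 1) * 2) * ∫⁻ z, Hf r f z := by
    have h1 := mul_meas_ge_le_lintegral hGm (μ ^ r) (μ := volume)
    have h2 := (h1.trans hGint).trans (mul_le_mul' le_rfl (good_bound hr1 hS hm hμt hH _))
    have hμr : μ ^ r = μ ^ (r - 1) * μ := by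
      conv_lhs => rw [show r = (r - 1) + 1 by ring]
      rw [ENNReal.rpow_add_of_nonneg _ _ (by linarith) (by norm_num), ENNReal.rpow_one]
    have hne : μ ^ (r - 1) ≠ 0 := by
      simp [ENNReal.rpow_eq_zero_iff, hμ0.ne', hμt.ne]
    have hnt : μ ^ (r - 1) ≠ ⊤ := (ENNReal.rpow_lt_top_of_nonneg (by linarith) hμt.ne).ne
    refine (ENNReal.mul_le_mul_iff_right hne hnt).1 ?_
    calc _ = μ ^ r * volume {x | μ ^ r ≤ G x} := by rw [hμr, mul_assoc]
      _ ≤ _ := h2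
      _ = _ := by
        rw [ENNReal.mul_rpow_of_nonneg _ _ (by linarith : 0 ≤ r - 1)]
        ring
  have hv2 : μ * volume {x | μ ≤ P x} ≤ C1 * ∫⁻ z, Hf r f z :=
    (mul_meas_ge_le_lintegral hPm μ).trans (badP_sum hr1 hK.nonneg hS.mν hm I)
  have hv3 : μ * volume (OmS Om ν) ≤ 5 * ∫⁻ z, Hf r f z := by
    calc _ ≤ μ * (5 * volume Om) := mul_le_mul' le_rfl (OmS_volume hS)
      _ = 5 * (μ * volume Om) := by ring
      _ ≤ _ := mul_le_mul' le_rfl hS.volume_le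
  calc _ ≤ μ * (volume {x | μ ^ r ≤ G x} + volume {x | μ ≤ P x} + volume (OmS Om ν)) := by
        refine mul_le_mul' le_rfl ((measure_mono hsub).trans ((measure_union_le _ _).trans ?_))
        exact add_le_add (measure_union_le _ _) le_rfl
    _ ≤ _ := by
        rw [mul_add, mul_add, add_mul, add_mul]
        exact add_le_add (add_le_add hv1 hv2) hv3

/-- The weak-type `(1,1)` Calderón–Zygmund endpoint used to lower the exponent in the
continuous Pisier–Xu inequality. -/
theorem weak_type_one_one_variational
    (r Nb : ℝ) (hr1 : 1 ≤ r) (hr2 : r < 2) (hNb : 0 < Nb)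
    (φ : SchwartzMap ℝ ℂ)
    (hφ : ∀ ξ : ℝ, 𝓕 (⇑φ) ξ ≠ 0 → (2 : ℝ) ^ (-Nb) < |ξ| ∧ |ξ| < (2 : ℝ) ^ Nb) :
    ∃ C : ℝ≥0, 0 < C ∧
      ∀ (Nk : ℕ → ℝ → ℤ), IsJumpCollection Nk →
      ∀ (f : ℤ → ℝ → ℂ), (∀ i, Measurable (f i)) → mixedNorm1 r f < ⊤ →
      ∀ lam : ℝ, 0 < lam →
      volume {x : ℝ |
          ENNReal.ofReal lam <
            (∑' k : ℕ, (ENNReal.ofReal (norm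
              (∑ i ∈ Finset.Ioc (Nk k x) (Nk (k + 1) x),
                conv (dilate φ i) (f i) x))) ^ r) ^ (1 / r)}
        ≤ (C : ℝ≥0∞) / ENNReal.ofReal lam * mixedNorm1 r f := by
  have hr0 : 0 < r := by linarith
  obtain ⟨A, hK⟩ := goodKernel_dilate φ (phi_mean_zero Nb φ hφ)
  obtain ⟨C, hC, hwin⟩ := window hK hr1 hr2
  refine ⟨4 * C.toNNReal + 1, by positivity, ?_⟩
  intro Nk hNk f hm hfin lam hlam
  have hmix : mixedNorm1 r f = ∫⁻ z, Hf r f z := by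
    unfold mixedNorm1 Hf
    simp only [ofReal_norm]
  rw [hmix] at hfin ⊢
  have hi : ∀ i, Integrable (f i) := fun i =>
    ⟨(hm i).aestronglyMeasurable, (lintegral_mono (enorm_le_Hf hr1 f i)).trans_lt hfin⟩
  set L := ENNReal.ofReal lam with hL
  have hL0 : 0 < L := ENNReal.ofReal_pos.2 hlam
  have hLt : L < ⊤ := ENNReal.ofReal_lt_top
  have h4 : 4 * (L / 4) = L := ENNReal.mul_div_cancel (by simp) (by simp)
  have hsub : {x : ℝ | L < (∑' k : ℕ, (ENNReal.ofReal (norm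
      (∑ i ∈ Finset.Ioc (Nk k x) (Nk (k + 1) x), conv (dilate φ i) (f i) x))) ^ r) ^ (1 / r)} ⊆
      ⋃ M : ℕ, SM (dilate φ) r f L M := by
    intro x hx
    simp only [Set.mem_ofPred_eq, ofReal_norm] at hx
    have hx2 : L ^ r < ∑' k : ℕ, ‖csum (dilate φ) f (Finset.Ioc (Nk k x) (Nk (k + 1) x)) x‖ₑ ^ r := by
      have := ENNReal.rpow_lt_rpow hx hr0
      rwa [← ENNReal.rpow_mul, one_div_mul_cancel hr0.ne', ENNReal.rpow_one] at this
    rw [ENNReal.tsum_eq_iSup_nat, lt_iSup_iff] at hx2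
    obtain ⟨k, hk⟩ := hx2
    rw [Set.mem_iUnion]
    refine ⟨(Nk 0 x).natAbs + (Nk k x).natAbs, k, fun l => Nk l x,
      monotone_nat_of_le_succ fun l => hNk.2 l x, ?_, ?_, hk⟩ <;> beta_reduce <;> omega
  have hmain : L / 4 * volume (⋃ M : ℕ, SM (dilate φ) r f L M) ≤ C * ∫⁻ z, Hf r f z := by
    rw [(SM_mono _ r f L).measure_iUnion, ENNReal.mul_iSup]
    refine iSup_le fun M => ?_
    have := hwin f hm hi hfin (L / 4) (ENNReal.div_pos hL0.ne' (by simp))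
      (ENNReal.div_lt_top hLt.ne (by simp)) M
    rwa [h4] at this
  refine (measure_mono hsub).trans ?_
  set V := volume (⋃ M : ℕ, SM (dilate φ) r f L M) with hV
  have hLV : L * V ≤ ((4 * C.toNNReal + 1 : ℝ≥0) : ℝ≥0∞) * ∫⁻ z, Hf r f z := by
    calc L * V = 4 * (L / 4 * V) := by rw [← mul_assoc, h4]
      _ ≤ 4 * (C * ∫⁻ z, Hf r f z) := mul_le_mul' le_rfl hmain
      _ ≤ _ := by
        rw [← mul_assoc]
        refine mul_le_mul' ?_ le_rfl
        push_cast
        rw [ENNReal.coe_toNNReal hC.ne]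
        exact le_self_add
  rw [← ENNReal.mul_div_right_comm, ENNReal.le_div_iff_mul_le (Or.inl hL0.ne') (Or.inl hLt.ne), mul_comm]
  exact hLV

end
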